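/- arXiv:1404.2893 — 6 statements merged into one kernel-verified Lean document; each statement's English description precedes it below -/
import Mathlib

section
/- Let f ∈ L¹(μ) be nonnegative with f ≠ 0 and with f·log f integrable. Then for every x ∈ L¹(μ) with ‖x‖₁ ≤ 1 such that f·log|x| is integrable, one has ∫_S f·log|x| dμ ≤ Φ₁(f). Moreover, the choice x = f/‖f‖₁ is admissible (‖x‖₁ = 1 and f·log|x| is integrable) and achieves equality: ∫_S f·log(f/‖f‖₁) dμ = Φ₁(f). Hence the indicator of L¹, namely sup{∫_S f·log|x| dμ : ‖x‖₁ ≤ 1}, equals Φ₁(f) and the supremum is attained. -/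
open MeasureTheory

/-- The entropy functional (indicator of `L¹`):
`Φ₁(f) = ∫ f·log f dμ − ‖f‖₁·log ‖f‖₁` (with `Real.log 0 = 0`, so `Φ₁(0) = 0`). -/
noncomputable def Phi1 {S : Type*} [MeasurableSpace S] (μ : Measure S) (f : S → ℝ) : ℝ :=
  ∫ s, f s * Real.log (f s) ∂μ - (∫ s, f s ∂μ) * Real.log (∫ s, f s ∂μ)

/-!
Since `log t ≤ t - 1`, with equality at `t = 1`, taking `t = r b / a` gives
`a log b ≤ a log a - a log r + (r b - a)` for every `r > 0`. Integrating with `a = f s` and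
`b = g s` bounds `∫ f log g` once for each `r`; the optimal choice `r = ∫ f / ∫ g` cancels the
linear terms and leaves `Φ₁(f) + ‖f‖₁ log ‖g‖₁`, whose last term is nonpositive on the unit ball of
`L¹`. Equality at `t = 1` means `g = f / r`, which is `f / ‖f‖₁` when `g` is normalized.
-/

section Real

variable {a b c r : ℝ}

theorem mul_log_le_mul_log_sub_add (hr : 0 < r) (ha : 0 ≤ a) (hb : 0 ≤ b) (hab : a = 0 ∨ b ≠ 0) :
    a * Real.log b ≤ a * Real.log a - a * Real.log r + (r * b - a) := by
  rcases ha.eq_or_lt with rfl | ha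
  · simpa using mul_nonneg hr.le hb
  have hb : 0 < b := hb.lt_of_ne' (hab.resolve_left ha.ne')
  have tangent : Real.log (r * b / a) ≤ r * b / a - 1 :=
    Real.log_le_sub_one_of_pos (by positivity)
  calc
    a * Real.log b = a * Real.log a - a * Real.log r + a * Real.log (r * b / a) := by
      rw [Real.log_div (by positivity) ha.ne', Real.log_mul hr.ne' hb.ne']
      ring
    _ ≤ a * Real.log a - a * Real.log r + a * (r * b / a - 1) := by gcongr
    _ = a * Real.log a - a * Real.log r + (r * b - a) := by field_simp

theorem mul_log_abs_div_self (a : ℝ) (hc : c ≠ 0) :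
    a * Real.log |a / c| = a * Real.log a - a * Real.log c := by
  rcases eq_or_ne a 0 with rfl | ha
  · simp
  · rw [Real.log_abs, Real.log_div ha hc, mul_sub]

end Real

section Integral

variable {S : Type*} [MeasurableSpace S] {μ : Measure S} {f g : S → ℝ}

theorem integral_pos_of_nonneg_ae_of_not_ae_eq_zero (hf : Integrable f μ) (hf_nonneg : 0 ≤ᵐ[μ] f)
    (hf_ne : ¬ f =ᵐ[μ] 0) : 0 < ∫ s, f s ∂μ :=
  (integral_nonneg_of_ae hf_nonneg).lt_of_ne'
    (mt (integral_eq_zero_iff_of_nonneg_ae hf_nonneg hf).1 hf_ne)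

theorem integral_mul_log_le_of_pos {r : ℝ} (hr : 0 < r) (hf : Integrable f μ)
    (hf_nonneg : 0 ≤ᵐ[μ] f) (hflog : Integrable (fun s ↦ f s * Real.log (f s)) μ)
    (hg : Integrable g μ) (hg_nonneg : 0 ≤ᵐ[μ] g)
    (hfg : Integrable (fun s ↦ f s * Real.log (g s)) μ) (hsupp : ∀ᵐ s ∂μ, f s = 0 ∨ g s ≠ 0) :
    ∫ s, f s * Real.log (g s) ∂μ ≤
      ∫ s, f s * Real.log (f s) ∂μ - (∫ s, f s ∂μ) * Real.log r +
        (r * ∫ s, g s ∂μ - ∫ s, f s ∂μ) := by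
  have hlog : Integrable (fun s ↦ f s * Real.log (f s) - f s * Real.log r) μ :=
    hflog.sub (hf.mul_const _)
  have hlin : Integrable (fun s ↦ r * g s - f s) μ := (hg.const_mul r).sub hf
  calc
    ∫ s, f s * Real.log (g s) ∂μ ≤
        ∫ s, (f s * Real.log (f s) - f s * Real.log r + (r * g s - f s)) ∂μ := by
      refine integral_mono_ae hfg (hlog.add hlin) ?_
      filter_upwards [hf_nonneg, hg_nonneg, hsupp] with s hfs hgs hs
      exact mul_log_le_mul_log_sub_add hr hfs hgs hs
    _ = _ := by
      rw [integral_add hlog hlin, integral_sub hflog (hf.mul_const _),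
        integral_sub (hg.const_mul r) hf, integral_mul_const, integral_const_mul]

theorem integral_mul_log_le_Phi1_add (hf : Integrable f μ) (hf_nonneg : 0 ≤ᵐ[μ] f)
    (hflog : Integrable (fun s ↦ f s * Real.log (f s)) μ)
    (hg : Integrable g μ) (hg_nonneg : 0 ≤ᵐ[μ] g)
    (hfg : Integrable (fun s ↦ f s * Real.log (g s)) μ) (hsupp : ∀ᵐ s ∂μ, f s = 0 ∨ g s ≠ 0) :
    ∫ s, f s * Real.log (g s) ∂μ ≤ Phi1 μ f + (∫ s, f s ∂μ) * Real.log (∫ s, g s ∂μ) := by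
  by_cases hf_zero : f =ᵐ[μ] 0
  · have mul_ae_zero (h : S → ℝ) : (fun s ↦ f s * h s) =ᵐ[μ] 0 := by
      filter_upwards [hf_zero] with s hs
      simp [hs]
    simp [Phi1, integral_eq_zero_of_ae hf_zero, integral_eq_zero_of_ae (mul_ae_zero _)]
  have hg_ne : ¬ g =ᵐ[μ] 0 := fun hg_zero ↦ hf_zero <| by
    filter_upwards [hg_zero, hsupp] with s hgs hs
    exact hs.resolve_right (not_not_intro hgs)
  have hF : 0 < ∫ s, f s ∂μ := integral_pos_of_nonneg_ae_of_not_ae_eq_zero hf hf_nonneg hf_zero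
  have hG : 0 < ∫ s, g s ∂μ := integral_pos_of_nonneg_ae_of_not_ae_eq_zero hg hg_nonneg hg_ne
  refine (integral_mul_log_le_of_pos (div_pos hF hG) hf hf_nonneg hflog hg hg_nonneg hfg
    hsupp).trans_eq ?_
  rw [Real.log_div hF.ne' hG.ne', div_mul_cancel₀ _ hG.ne', Phi1]
  ring

theorem integral_mul_log_abs_le_Phi1 {x : S → ℝ} (hf : Integrable f μ) (hf_nonneg : 0 ≤ᵐ[μ] f)
    (hflog : Integrable (fun s ↦ f s * Real.log (f s)) μ)
    (hx : Integrable x μ) (hx_le : ∫ s, |x s| ∂μ ≤ 1)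
    (hfx : Integrable (fun s ↦ f s * Real.log |x s|) μ) (hsupp : ∀ᵐ s ∂μ, f s = 0 ∨ x s ≠ 0) :
    ∫ s, f s * Real.log |x s| ∂μ ≤ Phi1 μ f := by
  have hx_nonneg : 0 ≤ᵐ[μ] fun s ↦ |x s| := .of_forall fun s ↦ abs_nonneg (x s)
  have hlog_norm : (∫ s, f s ∂μ) * Real.log (∫ s, |x s| ∂μ) ≤ 0 :=
    mul_nonpos_of_nonneg_of_nonpos (integral_nonneg_of_ae hf_nonneg)
      (Real.log_nonpos (integral_nonneg_of_ae hx_nonneg) hx_le)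
  calc
    ∫ s, f s * Real.log |x s| ∂μ ≤ Phi1 μ f + (∫ s, f s ∂μ) * Real.log (∫ s, |x s| ∂μ) :=
      integral_mul_log_le_Phi1_add hf hf_nonneg hflog hx.abs hx_nonneg hfx <|
        hsupp.mono fun s ↦ Or.imp_right abs_ne_zero.2
    _ ≤ Phi1 μ f := add_le_of_nonpos_right hlog_norm

theorem integral_abs_div_integral (hf_nonneg : 0 ≤ᵐ[μ] f) (hF : ∫ s, f s ∂μ ≠ 0) :
    ∫ s, |f s / ∫ u, f u ∂μ| ∂μ = 1 := by
  have habs : (fun s ↦ |f s / ∫ u, f u ∂μ|) =ᵐ[μ] fun s ↦ f s / ∫ u, f u ∂μ := by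
    filter_upwards [hf_nonneg] with s hs
    exact abs_of_nonneg (div_nonneg hs (integral_nonneg_of_ae hf_nonneg))
  rw [integral_congr_ae habs, integral_div, div_self hF]

theorem integrable_mul_log_abs_div {c : ℝ} (hc : c ≠ 0) (hf : Integrable f μ)
    (hflog : Integrable (fun s ↦ f s * Real.log (f s)) μ) :
    Integrable (fun s ↦ f s * Real.log |f s / c|) μ := by
  simp only [mul_log_abs_div_self _ hc]
  exact hflog.sub (hf.mul_const _)

theorem integral_mul_log_abs_div_integral (hf : Integrable f μ) (hF : ∫ s, f s ∂μ ≠ 0)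
    (hflog : Integrable (fun s ↦ f s * Real.log (f s)) μ) :
    ∫ s, f s * Real.log |f s / ∫ u, f u ∂μ| ∂μ = Phi1 μ f := by
  simp only [mul_log_abs_div_self _ hF]
  rw [integral_sub hflog (hf.mul_const _), integral_mul_const, Phi1]

end Integral

theorem stmt0_general {S : Type*} [MeasurableSpace S] (μ : Measure S)
    (f : S → ℝ) (hf : Integrable f μ) (hf_nonneg : 0 ≤ᵐ[μ] f) (hf_ne : ¬ f =ᵐ[μ] 0)
    (hflog : Integrable (fun s => f s * Real.log (f s)) μ) :
    (∀ x : S → ℝ, Integrable x μ → (∫ s, |x s| ∂μ) ≤ 1 →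
        Integrable (fun s => f s * Real.log |x s|) μ →
        (∀ᵐ s ∂μ, f s = 0 ∨ x s ≠ 0) →
        (∫ s, f s * Real.log |x s| ∂μ) ≤ Phi1 μ f) ∧
    ((∫ s, |f s / ∫ u, f u ∂μ| ∂μ) = 1 ∧
      Integrable (fun s => f s * Real.log |f s / ∫ u, f u ∂μ|) μ ∧
      (∫ s, f s * Real.log |f s / ∫ u, f u ∂μ| ∂μ) = Phi1 μ f) ∧
    IsGreatest
      {r : ℝ | ∃ x : S → ℝ, Integrable x μ ∧ (∫ s, |x s| ∂μ) ≤ 1 ∧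
        Integrable (fun s => f s * Real.log |x s|) μ ∧
        (∀ᵐ s ∂μ, f s = 0 ∨ x s ≠ 0) ∧
        r = ∫ s, f s * Real.log |x s| ∂μ}
      (Phi1 μ f) := by
  have hF : ∫ s, f s ∂μ ≠ 0 :=
    (integral_pos_of_nonneg_ae_of_not_ae_eq_zero hf hf_nonneg hf_ne).ne'
  have norm_eq := integral_abs_div_integral hf_nonneg hF
  have hlog := integrable_mul_log_abs_div hF hf hflog
  have attained := integral_mul_log_abs_div_integral hf hF hflog
  have hsupp : ∀ᵐ s ∂μ, f s = 0 ∨ f s / ∫ u, f u ∂μ ≠ 0 :=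
    .of_forall fun s ↦ or_iff_not_imp_left.2 fun hs ↦ div_ne_zero hs hF
  refine ⟨fun x ↦ integral_mul_log_abs_le_Phi1 hf hf_nonneg hflog, ⟨norm_eq, hlog, attained⟩,
    ⟨_, hf.div_const _, norm_eq.le, hlog, hsupp, attained.symm⟩, ?_⟩
  rintro _ ⟨x, hx, hx_le, hfx, hx_supp, rfl⟩
  exact integral_mul_log_abs_le_Phi1 hf hf_nonneg hflog hx hx_le hfx hx_supp

theorem stmt0 {S : Type*} [MeasurableSpace S] (μ : Measure S) [SigmaFinite μ]
    (f : S → ℝ) (hf : Integrable f μ) (hf_nonneg : 0 ≤ᵐ[μ] f) (hf_ne : ¬ f =ᵐ[μ] 0)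
    (hflog : Integrable (fun s => f s * Real.log (f s)) μ) :
    (∀ x : S → ℝ, Integrable x μ → (∫ s, |x s| ∂μ) ≤ 1 →
        Integrable (fun s => f s * Real.log |x s|) μ →
        (∀ᵐ s ∂μ, f s = 0 ∨ x s ≠ 0) →
        (∫ s, f s * Real.log |x s| ∂μ) ≤ Phi1 μ f) ∧
    ((∫ s, |f s / ∫ u, f u ∂μ| ∂μ) = 1 ∧
      Integrable (fun s => f s * Real.log |f s / ∫ u, f u ∂μ|) μ ∧
      (∫ s, f s * Real.log |f s / ∫ u, f u ∂μ| ∂μ) = Phi1 μ f) ∧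
    IsGreatest
      {r : ℝ | ∃ x : S → ℝ, Integrable x μ ∧ (∫ s, |x s| ∂μ) ≤ 1 ∧
        Integrable (fun s => f s * Real.log |x s|) μ ∧
        (∀ᵐ s ∂μ, f s = 0 ∨ x s ≠ 0) ∧
        r = ∫ s, f s * Real.log |x s| ∂μ}
      (Phi1 μ f) :=
  stmt0_general μ f hf hf_nonneg hf_ne hflog
end

section
/- Let 1 ≤ p₀, p₁ < ∞, let t ∈ (0,1), and define p by 1/p = (1−t)/p₀ + t/p₁. Then for every nonnegative f ∈ L¹(μ) with f ≠ 0 and f·log f integrable, the indicators satisfy the linearity formula Φ_{L^p}(f) = (1−t)·Φ_{L^{p₀}}(f) + t·Φ_{L^{p₁}}(f). -/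
open MeasureTheory

/-- The indicator (entropy functional) of the Köthe space `L^q(μ)` (`1 ≤ q < ∞`):
`Φ_{L^q}(f) = sup { ∫ f·log|x| dμ : x ∈ L^q(μ), ‖x‖_q ≤ 1, f·log|x| integrable }`. -/
noncomputable def indicatorLp {S : Type*} [MeasurableSpace S] (μ : Measure S) (q : ℝ)
    (f : S → ℝ) : ℝ :=
  sSup {r : ℝ | ∃ x : S → ℝ, AEStronglyMeasurable x μ ∧ Integrable (fun s => |x s| ^ q) μ ∧
    (∫ s, |x s| ^ q ∂μ) ≤ 1 ∧
    Integrable (fun s => f s * Real.log |x s|) μ ∧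
    (∀ᵐ s ∂μ, f s = 0 ∨ x s ≠ 0) ∧
    r = ∫ s, f s * Real.log |x s| ∂μ}

/-!
By the log-sum inequality, a density `g = |x|^q` of total mass at most `1` satisfies
`∫ f log g ≤ ∫ f log f - (∫ f) log (∫ f)`, with equality for `g = f / ∫ f`. Hence `Φ_{L^q}(f)` is
`q⁻¹` times a quantity that does not depend on `q`, so it is linear in `q⁻¹`.
-/

section Entropy

variable {S : Type*} [MeasurableSpace S] {μ : Measure S} {f g : S → ℝ}

/-- The entropy `Ent_μ(f) = ∫ f log f - (∫ f) log (∫ f)` of a nonnegative function, the common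
value of `q Φ_{L^q}(f)` for all `q > 0`. The function need not have integral `1`. -/
noncomputable def entropy (μ : Measure S) (f : S → ℝ) : ℝ :=
  ∫ s, f s * Real.log (f s) ∂μ - (∫ s, f s ∂μ) * Real.log (∫ s, f s ∂μ)

lemma mul_log_add_mul_log_sub_log_le {a b c d : ℝ} (ha : 0 < a) (hb : 0 < b) (hc : 0 < c)
    (hd : 0 < d) :
    a * Real.log b + a * (Real.log c - Real.log d) ≤ a * Real.log a + (c / d * b - a) := by
  have h_log : Real.log (c / d * b / a) =
      Real.log c - Real.log d + Real.log b - Real.log a := by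
    rw [Real.log_div (by positivity) ha.ne', Real.log_mul (by positivity) hb.ne',
      Real.log_div hc.ne' hd.ne']
  calc a * Real.log b + a * (Real.log c - Real.log d)
      = a * Real.log a + a * Real.log (c / d * b / a) := by rw [h_log]; ring
    _ ≤ a * Real.log a + a * (c / d * b / a - 1) := by
        gcongr
        exact Real.log_le_sub_one_of_pos (by positivity)
    _ = a * Real.log a + (c / d * b - a) := by field_simp

lemma ae_eq_zero_or_integral_pos (hf : Integrable f μ) (hf_nonneg : 0 ≤ᵐ[μ] f) :
    ∀ᵐ s ∂μ, f s = 0 ∨ 0 < ∫ s, f s ∂μ := by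
  rcases (integral_nonneg_of_ae hf_nonneg).eq_or_lt with h_zero | h_pos
  · filter_upwards [(integral_eq_zero_iff_of_nonneg_ae hf_nonneg hf).1 h_zero.symm] with s hs
    exact Or.inl hs
  · exact Filter.Eventually.of_forall fun _ => Or.inr h_pos

theorem integral_mul_log_le_entropy_add (hf : Integrable f μ) (hf_nonneg : 0 ≤ᵐ[μ] f)
    (hg : Integrable g μ) (hg_nonneg : 0 ≤ᵐ[μ] g) (hfg : ∀ᵐ s ∂μ, f s = 0 ∨ g s ≠ 0)
    (hff_log : Integrable (fun s => f s * Real.log (f s)) μ)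
    (hfg_log : Integrable (fun s => f s * Real.log (g s)) μ) :
    ∫ s, f s * Real.log (g s) ∂μ ≤ entropy μ f + (∫ s, f s ∂μ) * Real.log (∫ s, g s ∂μ) := by
  set F := ∫ s, f s ∂μ
  set G := ∫ s, g s ∂μ
  have hF_nonneg : 0 ≤ F := integral_nonneg_of_ae hf_nonneg
  have hG_nonneg : 0 ≤ G := integral_nonneg_of_ae hg_nonneg
  -- Rescaling `g` to have the same integral as `f` makes the linear term integrate to zero.
  have pointwise_le : ∀ᵐ s ∂μ, f s * Real.log (g s) + f s * (Real.log F - Real.log G) ≤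
      f s * Real.log (f s) + (F / G * g s - f s) := by
    filter_upwards [hf_nonneg, hg_nonneg, hfg, ae_eq_zero_or_integral_pos hf hf_nonneg,
      ae_eq_zero_or_integral_pos hg hg_nonneg] with s hfs hgs hfgs hF_pos hG_pos
    rcases hfs.eq_or_lt' with hf_zero | hf_pos
    · simpa [hf_zero] using mul_nonneg (div_nonneg hF_nonneg hG_nonneg) hgs
    · have hg_ne : g s ≠ 0 := hfgs.resolve_left hf_pos.ne'
      exact mul_log_add_mul_log_sub_log_le hf_pos (hgs.lt_of_ne' hg_ne)
        (hF_pos.resolve_left hf_pos.ne') (hG_pos.resolve_left hg_ne)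
  have h_linear : Integrable (fun s => F / G * g s - f s) μ := (hg.const_mul _).sub hf
  have integral_le : ∫ s, f s * Real.log (g s) ∂μ + F * (Real.log F - Real.log G) ≤
      ∫ s, f s * Real.log (f s) ∂μ + (F / G * G - F) := by
    have h := integral_mono_ae (hfg_log.add (hf.mul_const _)) (hff_log.add h_linear) pointwise_le
    simpa only [integral_add' hfg_log (hf.mul_const _), integral_add' hff_log h_linear,
      integral_sub (hg.const_mul _) hf, integral_mul_const, integral_const_mul] using h
  have h_mass : F / G * G ≤ F := mul_le_of_le_div₀ hF_nonneg hG_nonneg le_rfl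
  rw [entropy]
  linarith

end Entropy

section Indicator

variable {S : Type*} [MeasurableSpace S] {μ : Measure S} {q : ℝ} {f x : S → ℝ}

lemma integral_mul_log_abs_le_inv_mul_entropy (hq : 0 < q) (hf : Integrable f μ)
    (hf_nonneg : 0 ≤ᵐ[μ] f) (hf_log : Integrable (fun s => f s * Real.log (f s)) μ)
    (hx : Integrable (fun s => |x s| ^ q) μ) (hx_le : ∫ s, |x s| ^ q ∂μ ≤ 1)
    (hfx_log : Integrable (fun s => f s * Real.log |x s|) μ)
    (hfx : ∀ᵐ s ∂μ, f s = 0 ∨ x s ≠ 0) :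
    ∫ s, f s * Real.log |x s| ∂μ ≤ q⁻¹ * entropy μ f := by
  have h_nonneg : ∀ s, 0 ≤ |x s| ^ q := fun s => by positivity
  have hfx_pow : ∀ᵐ s ∂μ, f s = 0 ∨ |x s| ^ q ≠ 0 :=
    hfx.mono fun s => Or.imp_right fun hxs => (Real.rpow_pos_of_pos (abs_pos.2 hxs) q).ne'
  have h_log : (fun s => f s * Real.log (|x s| ^ q)) =ᵐ[μ]
      fun s => q * (f s * Real.log |x s|) := by
    filter_upwards [hfx] with s hs
    rcases hs with hfs | hxs
    · simp [hfs]
    · rw [Real.log_rpow (abs_pos.2 hxs), mul_left_comm]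
  rw [le_inv_mul_iff₀ hq]
  calc q * ∫ s, f s * Real.log |x s| ∂μ = ∫ s, f s * Real.log (|x s| ^ q) ∂μ := by
        rw [integral_congr_ae h_log, integral_const_mul]
    _ ≤ entropy μ f + (∫ s, f s ∂μ) * Real.log (∫ s, |x s| ^ q ∂μ) :=
        integral_mul_log_le_entropy_add hf hf_nonneg hx (.of_forall h_nonneg) hfx_pow hf_log
          ((hfx_log.const_mul q).congr h_log.symm)
    _ ≤ entropy μ f :=
        add_le_of_nonpos_right <| mul_nonpos_of_nonneg_of_nonpos
          (integral_nonneg_of_ae hf_nonneg) (Real.log_nonpos (integral_nonneg h_nonneg) hx_le)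

/-- The function `(f / ∫ f)^{1/q}` at which the supremum defining `Φ_{L^q}(f)` is attained
for `q > 0`. Since `a / 0 = 0`, it is then zero when `∫ f = 0`. -/
noncomputable def indicatorMaximizer (μ : Measure S) (q : ℝ) (f : S → ℝ) (s : S) : ℝ :=
  (f s / ∫ u, f u ∂μ) ^ q⁻¹

lemma aestronglyMeasurable_indicatorMaximizer (hf : AEStronglyMeasurable f μ) :
    AEStronglyMeasurable (indicatorMaximizer μ q f) μ :=
  ((hf.aemeasurable.div_const _).pow_const _).aestronglyMeasurable

lemma abs_indicatorMaximizer_rpow_ae_eq (hq : q ≠ 0) (hf_nonneg : 0 ≤ᵐ[μ] f) :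
    (fun s => |indicatorMaximizer μ q f s| ^ q) =ᵐ[μ] fun s => f s / ∫ u, f u ∂μ := by
  filter_upwards [hf_nonneg] with s hfs
  have h_div : 0 ≤ f s / ∫ u, f u ∂μ := div_nonneg hfs (integral_nonneg_of_ae hf_nonneg)
  rw [indicatorMaximizer, abs_of_nonneg (Real.rpow_nonneg h_div _), Real.rpow_inv_rpow h_div hq]

lemma ae_eq_zero_or_indicatorMaximizer_ne_zero (hf : Integrable f μ) (hf_nonneg : 0 ≤ᵐ[μ] f) :
    ∀ᵐ s ∂μ, f s = 0 ∨ indicatorMaximizer μ q f s ≠ 0 := by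
  filter_upwards [hf_nonneg, ae_eq_zero_or_integral_pos hf hf_nonneg] with s hfs hF
  rcases hfs.eq_or_lt' with hf_zero | hf_pos
  · exact Or.inl hf_zero
  · exact Or.inr (Real.rpow_pos_of_pos (div_pos hf_pos (hF.resolve_left hf_pos.ne')) _).ne'

lemma mul_log_abs_indicatorMaximizer_ae_eq (hf : Integrable f μ) (hf_nonneg : 0 ≤ᵐ[μ] f) :
    (fun s => f s * Real.log |indicatorMaximizer μ q f s|) =ᵐ[μ]
      fun s => q⁻¹ * (f s * Real.log (f s) - f s * Real.log (∫ u, f u ∂μ)) := by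
  filter_upwards [hf_nonneg, ae_eq_zero_or_integral_pos hf hf_nonneg] with s hfs hF
  rcases hfs.eq_or_lt' with hf_zero | hf_pos
  · simp [hf_zero]
  · have hf_ne : f s ≠ 0 := hf_pos.ne'
    have hF_pos := hF.resolve_left hf_ne
    rw [indicatorMaximizer, Real.log_abs, Real.log_rpow (div_pos hf_pos hF_pos),
      Real.log_div hf_ne hF_pos.ne']
    ring

theorem indicatorLp_eq_inv_mul_entropy (hq : 0 < q) (hf : Integrable f μ)
    (hf_nonneg : 0 ≤ᵐ[μ] f) (hf_log : Integrable (fun s => f s * Real.log (f s)) μ) :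
    indicatorLp μ q f = q⁻¹ * entropy μ f := by
  have h_pow := abs_indicatorMaximizer_rpow_ae_eq hq.ne' hf_nonneg
  have h_log := mul_log_abs_indicatorMaximizer_ae_eq (q := q) hf hf_nonneg
  refine IsGreatest.csSup_eq ⟨⟨indicatorMaximizer μ q f,
    aestronglyMeasurable_indicatorMaximizer hf.aestronglyMeasurable,
    (hf.div_const _).congr h_pow.symm, ?mass_le_one,
    ((hf_log.sub (hf.mul_const _)).const_mul _).congr h_log.symm,
    ae_eq_zero_or_indicatorMaximizer_ne_zero hf hf_nonneg, ?value⟩, ?upper_bound⟩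
  case mass_le_one =>
    rw [integral_congr_ae h_pow, integral_div]
    exact div_self_le_one _
  case value =>
    rw [integral_congr_ae h_log, integral_const_mul, integral_sub hf_log (hf.mul_const _),
      integral_mul_const, entropy]
  case upper_bound =>
    rintro _ ⟨x, -, hx, hx_le, hfx_log, hfx, rfl⟩
    exact integral_mul_log_abs_le_inv_mul_entropy hq hf hf_nonneg hf_log hx hx_le hfx_log hfx

end Indicator

theorem stmt2_general {S : Type*} [MeasurableSpace S] {μ : Measure S} {p₀ p₁ t p : ℝ}
    (hp₀ : 0 < p₀) (hp₁ : 0 < p₁) (hp_pos : 0 < p) (hp : 1 / p = (1 - t) / p₀ + t / p₁)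
    {f : S → ℝ} (hf : Integrable f μ) (hf_nonneg : 0 ≤ᵐ[μ] f)
    (hf_log : Integrable (fun s => f s * Real.log (f s)) μ) :
    indicatorLp μ p f = (1 - t) * indicatorLp μ p₀ f + t * indicatorLp μ p₁ f := by
  rw [indicatorLp_eq_inv_mul_entropy hp_pos hf hf_nonneg hf_log,
    indicatorLp_eq_inv_mul_entropy hp₀ hf hf_nonneg hf_log,
    indicatorLp_eq_inv_mul_entropy hp₁ hf hf_nonneg hf_log, ← one_div, hp]
  ring

theorem stmt2 {S : Type*} [MeasurableSpace S] (μ : Measure S) [SigmaFinite μ]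
    (p₀ p₁ t p : ℝ) (hp₀ : 1 ≤ p₀) (hp₁ : 1 ≤ p₁) (ht : t ∈ Set.Ioo (0 : ℝ) 1)
    (hp : 1 / p = (1 - t) / p₀ + t / p₁)
    (f : S → ℝ) (hf : Integrable f μ) (hf_nonneg : 0 ≤ᵐ[μ] f) (hf_ne : ¬ f =ᵐ[μ] 0)
    (hflog : Integrable (fun s => f s * Real.log (f s)) μ) :
    indicatorLp μ p f = (1 - t) * indicatorLp μ p₀ f + t * indicatorLp μ p₁ f := by
  have hp_pos : 0 < p := one_div_pos.1 <| hp ▸ add_pos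
    (div_pos (sub_pos.2 ht.2) (by linarith)) (div_pos ht.1 (by linarith))
  exact stmt2_general (by linarith) (by linarith) hp_pos hp hf hf_nonneg hflog
end

section
/- Let f, g ∈ L¹(μ) be nonnegative and nonzero, with f·log f and g·log g integrable. Then (f+g)·log(f+g) is integrable and 0 ≤ Φ₁(f) + Φ₁(g) − Φ₁(f+g) ≤ (log 2)·(‖f‖₁ + ‖g‖₁). -/
open MeasureTheory

/-!
With `D(a, b) = (a + b) log (a + b) - a log a - b log b`, the concavity defect of `Φ₁` at `f, g` is
`D(∫ f, ∫ g) - ∫ D(f, g)`. It is nonnegative by the log-sum inequality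
`∫ f log (h / f) ≤ (∫ f) log (∫ h / ∫ f)`, used for `h = f + g` with `f` and with `g`, and the
pointwise bounds `0 ≤ D(a, b) ≤ (a + b) log 2` bound it from above by `(∫ f + ∫ g) log 2`.
-/

section Real

variable {a b c : ℝ}

theorem mul_log_sub_mul_log_le_sub (ha : 0 ≤ a) (hc : 0 ≤ c) (hac : c = 0 → a = 0) :
    a * Real.log c - a * Real.log a ≤ c - a := by
  rcases ha.eq_or_lt with rfl | ha_pos
  · simpa only [zero_mul, sub_zero] using hc
  · have hc_pos : 0 < c := hc.lt_of_ne' fun h => ha_pos.ne' (hac h)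
    calc a * Real.log c - a * Real.log a
        = a * Real.log (c / a) := by rw [Real.log_div hc_pos.ne' ha_pos.ne', mul_sub]
      _ ≤ a * (c / a - 1) := by gcongr; exact Real.log_le_sub_one_of_pos (div_pos hc_pos ha_pos)
      _ = c - a := by field_simp

/-- The right-hand side is the tangent plane at `(A, C)` of the concave, `1`-homogeneous function
`(a, c) ↦ a log (c / a)`. -/
theorem mul_log_sub_mul_log_le_of_pos {A C : ℝ} (hA : 0 < A) (hC : 0 < C)
    (ha : 0 ≤ a) (hc : 0 ≤ c) (hac : c = 0 → a = 0) :
    a * Real.log c - a * Real.log a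
      ≤ a * (Real.log C - Real.log A) + (A / C * c - a) := by
  rcases ha.eq_or_lt with rfl | ha_pos
  · simp only [zero_mul, sub_zero, zero_add]
    positivity
  · have hc_ne : c ≠ 0 := fun h => ha_pos.ne' (hac h)
    have hlog : Real.log (A / C * c) = Real.log A - Real.log C + Real.log c := by
      rw [Real.log_mul (by positivity) hc_ne, Real.log_div hA.ne' hC.ne']
    have hgibbs := mul_log_sub_mul_log_le_sub ha (c := A / C * c) (by positivity)
      fun h => absurd h (by positivity)
    rw [hlog] at hgibbs
    linarith

theorem mul_log_self_le_mul_log (ha : 0 ≤ a) (hac : a ≤ c) :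
    a * Real.log a ≤ a * Real.log c := by
  rcases ha.eq_or_lt with rfl | ha_pos
  · simp only [zero_mul, le_refl]
  · gcongr

theorem mul_log_add_mul_log_le (ha : 0 ≤ a) (hb : 0 ≤ b) :
    a * Real.log a + b * Real.log b ≤ (a + b) * Real.log (a + b) := by
  rw [add_mul]
  exact add_le_add (mul_log_self_le_mul_log ha (le_add_of_nonneg_right hb))
    (mul_log_self_le_mul_log hb (le_add_of_nonneg_left ha))

theorem add_mul_log_add_le (ha : 0 ≤ a) (hb : 0 ≤ b) :
    (a + b) * Real.log (a + b)
      ≤ a * Real.log a + b * Real.log b + Real.log 2 * (a + b) := by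
  rcases (add_nonneg ha hb).eq_or_lt with hab | hab
  · obtain ⟨rfl, rfl⟩ := (add_eq_zero_iff_of_nonneg ha hb).1 hab.symm
    simp only [add_zero, zero_mul, mul_zero, le_refl]
  · have hlog : Real.log ((a + b) / 2) = Real.log (a + b) - Real.log 2 :=
      Real.log_div hab.ne' two_ne_zero
    have hne : (a + b) / 2 ≠ 0 := (half_pos hab).ne'
    have ha' := mul_log_sub_mul_log_le_sub ha (half_pos hab).le fun h => absurd h hne
    have hb' := mul_log_sub_mul_log_le_sub hb (half_pos hab).le fun h => absurd h hne
    rw [hlog] at ha' hb'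
    linarith

end Real

section Integral

variable {S : Type*} [MeasurableSpace S] {μ : Measure S} {f g h : S → ℝ}

theorem integrable_mul_log_of_ae_le (hf : Integrable f μ) (hh : Integrable h μ)
    (hf_nonneg : 0 ≤ᵐ[μ] f) (hfh : f ≤ᵐ[μ] h)
    (hflog : Integrable (fun s => f s * Real.log (f s)) μ) :
    Integrable (fun s => f s * Real.log (h s)) μ := by
  have hmeas : AEStronglyMeasurable (fun s => f s * Real.log (h s)) μ :=
    hf.1.mul hh.1.aemeasurable.log.aestronglyMeasurable
  have hdiff : Integrable (fun s => f s * Real.log (h s) - f s * Real.log (f s)) μ := by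
    refine (hh.sub hf).mono' (hmeas.sub hflog.1) ?_
    filter_upwards [hf_nonneg, hfh] with s hs hle
    rw [Real.norm_of_nonneg (sub_nonneg.2 (mul_log_self_le_mul_log hs hle))]
    exact mul_log_sub_mul_log_le_sub hs (hs.trans hle) fun h0 => le_antisymm (h0 ▸ hle) hs
  simpa only [Pi.add_def, sub_add_cancel] using hdiff.add hflog

theorem integrable_add_mul_log_add (hf : Integrable f μ) (hg : Integrable g μ)
    (hf_nonneg : 0 ≤ᵐ[μ] f) (hg_nonneg : 0 ≤ᵐ[μ] g)
    (hflog : Integrable (fun s => f s * Real.log (f s)) μ)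
    (hglog : Integrable (fun s => g s * Real.log (g s)) μ) :
    Integrable (fun s => (f s + g s) * Real.log (f s + g s)) μ := by
  simp only [add_mul]
  exact (integrable_mul_log_of_ae_le hf (hf.add hg) hf_nonneg
      (hg_nonneg.mono fun _ => le_add_of_nonneg_right) hflog).add
    (integrable_mul_log_of_ae_le hg (hf.add hg) hg_nonneg
      (hf_nonneg.mono fun _ => le_add_of_nonneg_left) hglog)

theorem integral_mul_log_sub_mul_log_le (hf : Integrable f μ) (hh : Integrable h μ)
    (hf_nonneg : 0 ≤ᵐ[μ] f) (hh_nonneg : 0 ≤ᵐ[μ] h) (hfh : ∀ᵐ s ∂μ, h s = 0 → f s = 0)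
    (hlog : Integrable (fun s => f s * Real.log (h s) - f s * Real.log (f s)) μ) :
    ∫ s, (f s * Real.log (h s) - f s * Real.log (f s)) ∂μ
      ≤ (∫ s, f s ∂μ) * Real.log (∫ s, h s ∂μ) - (∫ s, f s ∂μ) * Real.log (∫ s, f s ∂μ) := by
  set A := ∫ s, f s ∂μ with hA
  set C := ∫ s, h s ∂μ
  rcases (integral_nonneg_of_ae hf_nonneg).eq_or_lt with hA_zero | hA_pos
  · have hf_zero : f =ᵐ[μ] 0 := (integral_eq_zero_iff_of_nonneg_ae hf_nonneg hf).1 hA_zero.symm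
    refine (integral_eq_zero_of_ae ?_).trans_le ?_
    · filter_upwards [hf_zero] with s hs
      simp only [hs, Pi.zero_apply, zero_mul, sub_zero]
    · rw [hA, ← hA_zero, zero_mul, zero_mul, sub_zero]
  · have hC_pos : 0 < C := by
      refine (integral_nonneg_of_ae hh_nonneg).lt_of_ne' fun hC_zero => hA_pos.ne' ?_
      have hh_zero := (integral_eq_zero_iff_of_nonneg_ae hh_nonneg hh).1 hC_zero
      exact integral_eq_zero_of_ae (hh_zero.mp (hfh.mono fun _ hs => hs))
    have hlin : Integrable (fun s => f s * (Real.log C - Real.log A)) μ := hf.mul_const _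
    have hrem : Integrable (fun s => A / C * h s - f s) μ := (hh.const_mul _).sub hf
    calc ∫ s, (f s * Real.log (h s) - f s * Real.log (f s)) ∂μ
        ≤ ∫ s, (f s * (Real.log C - Real.log A) + (A / C * h s - f s)) ∂μ := by
          refine integral_mono_ae hlog (hlin.add hrem) ?_
          filter_upwards [hf_nonneg, hh_nonneg, hfh] with s hfs hhs hac
          exact mul_log_sub_mul_log_le_of_pos hA_pos hC_pos hfs hhs hac
      _ = A * (Real.log C - Real.log A) + (A / C * C - A) := by
          rw [integral_add hlin hrem, integral_sub (hh.const_mul _) hf, integral_mul_const,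
            integral_const_mul]
      _ = A * Real.log C - A * Real.log A := by field_simp; ring

theorem integral_mul_log_sub_integral_mul_log_le_of_ae_le (hf : Integrable f μ)
    (hh : Integrable h μ) (hf_nonneg : 0 ≤ᵐ[μ] f) (hfh : f ≤ᵐ[μ] h)
    (hflog : Integrable (fun s => f s * Real.log (f s)) μ) :
    ∫ s, f s * Real.log (h s) ∂μ - ∫ s, f s * Real.log (f s) ∂μ
      ≤ (∫ s, f s ∂μ) * Real.log (∫ s, h s ∂μ) - (∫ s, f s ∂μ) * Real.log (∫ s, f s ∂μ) := by
  have hfhlog := integrable_mul_log_of_ae_le hf hh hf_nonneg hfh hflog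
  have hzero : ∀ᵐ s ∂μ, h s = 0 → f s = 0 := by
    filter_upwards [hf_nonneg, hfh] with s hs hle h0
    exact le_antisymm (h0 ▸ hle) hs
  rw [← integral_sub hfhlog hflog]
  exact integral_mul_log_sub_mul_log_le hf hh hf_nonneg (hf_nonneg.trans hfh) hzero
    (hfhlog.sub hflog)

theorem phi1_add_le (hf : Integrable f μ) (hg : Integrable g μ)
    (hf_nonneg : 0 ≤ᵐ[μ] f) (hg_nonneg : 0 ≤ᵐ[μ] g)
    (hflog : Integrable (fun s => f s * Real.log (f s)) μ)
    (hglog : Integrable (fun s => g s * Real.log (g s)) μ) :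
    Phi1 μ (fun s => f s + g s) ≤ Phi1 μ f + Phi1 μ g := by
  have hfh : f ≤ᵐ[μ] fun s => f s + g s := hg_nonneg.mono fun _ => le_add_of_nonneg_right
  have hgh : g ≤ᵐ[μ] fun s => f s + g s := hf_nonneg.mono fun _ => le_add_of_nonneg_left
  have hf_logsum := integral_mul_log_sub_integral_mul_log_le_of_ae_le hf (hf.add hg) hf_nonneg hfh
    hflog
  have hg_logsum := integral_mul_log_sub_integral_mul_log_le_of_ae_le hg (hf.add hg) hg_nonneg hgh
    hglog
  have hsplit : ∫ s, (f s + g s) * Real.log (f s + g s) ∂μ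
      = ∫ s, f s * Real.log (f s + g s) ∂μ + ∫ s, g s * Real.log (f s + g s) ∂μ := by
    simp only [add_mul]
    exact integral_add (integrable_mul_log_of_ae_le hf (hf.add hg) hf_nonneg hfh hflog)
      (integrable_mul_log_of_ae_le hg (hf.add hg) hg_nonneg hgh hglog)
  simp only [Pi.add_apply, integral_add hf hg] at hf_logsum hg_logsum
  simp only [Phi1, hsplit, integral_add hf hg]
  linarith

theorem phi1_add_phi1_le (hf : Integrable f μ) (hg : Integrable g μ)
    (hf_nonneg : 0 ≤ᵐ[μ] f) (hg_nonneg : 0 ≤ᵐ[μ] g)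
    (hflog : Integrable (fun s => f s * Real.log (f s)) μ)
    (hglog : Integrable (fun s => g s * Real.log (g s)) μ) :
    Phi1 μ f + Phi1 μ g
      ≤ Phi1 μ (fun s => f s + g s) + Real.log 2 * ((∫ s, f s ∂μ) + ∫ s, g s ∂μ) := by
  have hmono : ∫ s, f s * Real.log (f s) ∂μ + ∫ s, g s * Real.log (g s) ∂μ
      ≤ ∫ s, (f s + g s) * Real.log (f s + g s) ∂μ := by
    rw [← integral_add hflog hglog]
    refine integral_mono_ae (hflog.add hglog)
      (integrable_add_mul_log_add hf hg hf_nonneg hg_nonneg hflog hglog) ?_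
    filter_upwards [hf_nonneg, hg_nonneg] with s hfs hgs
    exact mul_log_add_mul_log_le hfs hgs
  have hnorms := add_mul_log_add_le (integral_nonneg_of_ae hf_nonneg)
    (integral_nonneg_of_ae hg_nonneg)
  simp only [Phi1, integral_add hf hg]
  linarith

end Integral

theorem stmt3 {S : Type*} [MeasurableSpace S] (μ : Measure S) [SigmaFinite μ]
    (f g : S → ℝ) (hf : Integrable f μ) (hg : Integrable g μ)
    (hf_nonneg : 0 ≤ᵐ[μ] f) (hg_nonneg : 0 ≤ᵐ[μ] g)
    (hf_ne : ¬ f =ᵐ[μ] 0) (hg_ne : ¬ g =ᵐ[μ] 0)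
    (hflog : Integrable (fun s => f s * Real.log (f s)) μ)
    (hglog : Integrable (fun s => g s * Real.log (g s)) μ) :
    Integrable (fun s => (f s + g s) * Real.log (f s + g s)) μ ∧
    0 ≤ Phi1 μ f + Phi1 μ g - Phi1 μ (fun s => f s + g s) ∧
    Phi1 μ f + Phi1 μ g - Phi1 μ (fun s => f s + g s) ≤
      Real.log 2 * ((∫ s, f s ∂μ) + ∫ s, g s ∂μ) :=
  ⟨integrable_add_mul_log_add hf hg hf_nonneg hg_nonneg hflog hglog,
    sub_nonneg.2 (phi1_add_le hf hg hf_nonneg hg_nonneg hflog hglog),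
    sub_le_iff_le_add'.2 (phi1_add_phi1_le hf hg hf_nonneg hg_nonneg hflog hglog)⟩
end

section
/- Let L : C¹(ℝ) → C(ℝ) be any map (not assumed linear or continuous) from the continuously differentiable real-valued functions on ℝ to the continuous real-valued functions on ℝ which satisfies the Leibniz rule L(f·g) = f·(Lg) + g·(Lf) for all f, g ∈ C¹(ℝ). Then there exist continuous functions a, b ∈ C(ℝ) such that for every f ∈ C¹(ℝ) and every x ∈ ℝ, (Lf)(x) = a(x)·f′(x) + b(x)·f(x)·ln|f(x)|, where f(x)·ln|f(x)| is interpreted as 0 whenever f(x) = 0. -/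
/-!
Multiplying by a bump function shows that a Leibniz operator `L` is local: `L f x` depends only on
the germ of `f` at `x`. Conjugating by the exponential, `T h = e⁻ʰ L (eʰ)`, turns the Leibniz rule
into additivity.

An additive local operator `T` with continuous values is homogeneous by a gliding hump argument: if
`T (c φ) = c T φ` fails at a point, it fails on a whole neighbourhood, and at each point `u` of it
the additive map `d ↦ T (d φ) u` is unbounded near `0`. Interpolating very small constants `d k`
near a sequence of distinct points `u k` by one smooth `ψ` makes the continuous function `T (ψ φ)`
unbounded on a ball.

On the line, gluing two `C¹` functions with the same `1`-jet at `x` shows that a local operator with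
continuous values depends only on the `1`-jet. So `T` is determined by its values on `1` and on the
identity. Where `f > 0`, the jet of `f` is that of `eʰ` with `h` affine, so the formula for `T`
gives the one for `L`; negative values follow from `L (-f) = -L f`, zeros with `f' ≠ 0` by
continuity, and zeros of the whole jet from `L 0 = 0`.
-/

open Function Metric Topology

lemma exists_seq_isOpen_pairwise_disjoint_subset {X : Type*} [TopologicalSpace X] [T2Space X]
    {V : Set X} (hV : IsOpen V) (hinf : V.Infinite) :
    ∃ U : ℕ → Set X, (∀ k, (U k).Nonempty) ∧ (∀ k, IsOpen (U k)) ∧ (∀ k, U k ⊆ V) ∧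
      Pairwise (Disjoint on U) := by
  have : Infinite V := hinf.to_subtype
  obtain ⟨U, hUinf, hUopen, hUdisj⟩ := exists_seq_infinite_isOpen_pairwise_disjoint V
  exact ⟨fun k => Subtype.val '' U k, fun k => (hUinf k).nonempty.image _,
    fun k => hV.isOpenMap_subtype_val _ (hUopen k), fun k => Subtype.coe_image_subset V (U k),
    fun i j hij => (Set.disjoint_image_iff Subtype.val_injective).2 (hUdisj hij)⟩

lemma exists_norm_le_lt_norm_map_of_map_smul_ne {F G : Type*} [NormedAddCommGroup F]
    [NormedSpace ℝ F] [NormedAddCommGroup G] [NormedSpace ℝ G] (A : F →+ G) {c : ℝ} {v : F}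
    (hne : A (c • v) ≠ c • A v) {ε : ℝ} (hε : 0 < ε) (K : ℝ) : ∃ w, ‖w‖ ≤ ε ∧ K < ‖A w‖ := by
  by_contra! hbdd
  have hA : Continuous A := by
    refine A.continuous_of_isBounded_nhds_zero (closedBall_mem_nhds 0 hε) ?_
    refine isBounded_iff_forall_norm_le.2 ⟨K, ?_⟩
    rintro _ ⟨w, hw, rfl⟩
    exact hbdd w (mem_closedBall_zero_iff.1 hw)
  exact hne (map_real_smul A hA c v)

section Interpolation

variable {E F : Type*} [NormedAddCommGroup E] [NormedSpace ℝ E]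
  [NormedAddCommGroup F] [NormedSpace ℝ F] {n : ℕ}

lemma exists_pos_forall_norm_iteratedFDeriv_le {f : E → F} (hf : ContDiff ℝ n f)
    (hsupp : HasCompactSupport f) :
    ∃ M : ℝ, 0 < M ∧ ∀ k ≤ n, ∀ x, ‖iteratedFDeriv ℝ k f x‖ ≤ M := by
  have hbound : ∀ k : ℕ, ∃ C : ℝ, k ≤ n → ∀ x, ‖iteratedFDeriv ℝ k f x‖ ≤ C := by
    intro k
    by_cases hk : k ≤ n
    · obtain ⟨C, hC⟩ := (hsupp.iteratedFDeriv (𝕜 := ℝ) k).exists_bound_of_continuous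
        (hf.continuous_iteratedFDeriv (by exact_mod_cast hk))
      exact ⟨C, fun _ => hC⟩
    · exact ⟨0, fun h => absurd h hk⟩
  choose C hC using hbound
  obtain ⟨M, hM⟩ := ((Finset.range (n + 1)).image C).bddAbove
  refine ⟨max M 1, by positivity, fun k hk x => (hC k hk x).trans (le_max_of_le_left ?_)⟩
  exact hM (Finset.mem_image_of_mem C (Finset.mem_range_succ_iff.2 hk))

lemma exists_pos_forall_contDiff_tsum_smul [CompleteSpace F] {φ : ℕ → E → F}
    (hφ : ∀ k, ContDiff ℝ n (φ k)) (hsupp : ∀ k, HasCompactSupport (φ k)) :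
    ∃ ε : ℕ → ℝ, (∀ k, 0 < ε k) ∧
      ∀ c : ℕ → ℝ, (∀ k, ‖c k‖ ≤ ε k) → ContDiff ℝ n fun x => ∑' k, c k • φ k x := by
  choose M hMpos hM using fun k => exists_pos_forall_norm_iteratedFDeriv_le (hφ k) (hsupp k)
  refine ⟨fun k => (1 / 2) ^ k / M k, fun k => div_pos (by positivity) (hMpos k), fun c hc => ?_⟩
  refine contDiff_tsum (N := n) (v := fun _ k => (1 / 2 : ℝ) ^ k)
    (fun k => contDiff_const.smul (hφ k)) (fun _ _ => summable_geometric_two) ?_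
  intro j k x hj
  have hjn : j ≤ n := by exact_mod_cast hj
  have hφj : ContDiffAt ℝ j (φ k) x := (hφ k).contDiffAt.of_le (by exact_mod_cast hjn)
  calc ‖iteratedFDeriv ℝ j (fun y => c k • φ k y) x‖
      = ‖c k‖ * ‖iteratedFDeriv ℝ j (φ k) x‖ := by
        rw [iteratedFDeriv_const_smul_apply' hφj, norm_smul]
    _ ≤ (1 / 2) ^ k / M k * M k :=
        mul_le_mul (hc k) (hM k j hjn x) (norm_nonneg _) (div_pos (by positivity) (hMpos k)).le
    _ = (1 / 2) ^ k := div_mul_cancel₀ _ (hMpos k).ne'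

lemma exists_contDiffBump_support_subset [HasContDiffBump E] {U : Set E} {x : E} (hU : U ∈ 𝓝 x) :
    ∃ φ : ContDiffBump x, support φ ⊆ U := by
  obtain ⟨r, hr, hrU⟩ := Metric.mem_nhds_iff.1 hU
  exact ⟨⟨r / 2, r, half_pos hr, half_lt_self hr⟩, (ContDiffBump.support_eq _).trans_subset hrU⟩

lemma exists_pos_forall_exists_contDiff_eventuallyEq_const [FiniteDimensional ℝ E]
    {U : ℕ → Set E} (hUopen : ∀ k, IsOpen (U k)) (hUdisj : Pairwise (Disjoint on U))
    {u : ℕ → E} (hu : ∀ k, u k ∈ U k) :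
    ∃ ε : ℕ → ℝ, (∀ k, 0 < ε k) ∧ ∀ c : ℕ → ℝ, (∀ k, ‖c k‖ ≤ ε k) →
      ∃ ψ : E → ℝ, ContDiff ℝ n ψ ∧ ∀ k, ψ =ᶠ[𝓝 (u k)] fun _ => c k := by
  choose φ hφU using fun k => exists_contDiffBump_support_subset ((hUopen k).mem_nhds (hu k))
  obtain ⟨ε, hε, hsum⟩ := exists_pos_forall_contDiff_tsum_smul (n := n)
    (φ := fun k => φ k) (fun k => (φ k).contDiff) (fun k => (φ k).hasCompactSupport)
  refine ⟨ε, hε, fun c hc => ⟨fun x => ∑' k, c k • φ k x, hsum c hc, fun k => ?_⟩⟩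
  filter_upwards [(hUopen k).mem_nhds (hu k), (φ k).eventuallyEq_one] with y hyU hy
  have hother : ∀ j ≠ k, c j • φ j y = 0 := by
    intro j hj
    have hyj : y ∉ support (φ j) := fun h => Set.disjoint_left.1 (hUdisj hj) (hφU j h) hyU
    rw [notMem_support.1 hyj, smul_zero]
  rw [tsum_eq_single k hother, hy, Pi.one_apply, smul_eq_mul, mul_one]

end Interpolation

section Gluing

variable {F : Type*} [NormedAddCommGroup F] [NormedSpace ℝ F] {f g : ℝ → F} {x : ℝ}

lemma hasDerivAt_ite_le (hf : Differentiable ℝ f) (hg : Differentiable ℝ g) (h0 : f x = g x)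
    (h1 : deriv f x = deriv g x) (y : ℝ) :
    HasDerivAt (fun z => if z ≤ x then f z else g z)
      (if y ≤ x then deriv f y else deriv g y) y := by
  rcases lt_trichotomy y x with hy | rfl | hy
  · rw [if_pos hy.le]
    refine (hf y).hasDerivAt.congr_of_eventuallyEq ?_
    filter_upwards [Iio_mem_nhds hy] with z hz using if_pos hz.le
  · rw [if_pos le_rfl, ← hasDerivWithinAt_univ, ← Set.Iic_union_Ioi (a := y)]
    refine HasDerivWithinAt.union ?_ ?_
    · exact (hf y).hasDerivAt.hasDerivWithinAt.congr (fun z hz => if_pos hz) (if_pos le_rfl)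
    · rw [h1]
      exact (hg y).hasDerivAt.hasDerivWithinAt.congr (fun z hz => if_neg (not_le.2 hz))
        ((if_pos le_rfl).trans h0)
  · rw [if_neg hy.not_ge]
    refine (hg y).hasDerivAt.congr_of_eventuallyEq ?_
    filter_upwards [Ioi_mem_nhds hy] with z hz using if_neg (not_le.2 hz)

lemma contDiff_one_ite_le (hf : ContDiff ℝ 1 f) (hg : ContDiff ℝ 1 g) (h0 : f x = g x)
    (h1 : deriv f x = deriv g x) : ContDiff ℝ 1 fun y => if y ≤ x then f y else g y := by
  obtain ⟨hfd, hfc⟩ := contDiff_one_iff_deriv.1 hf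
  obtain ⟨hgd, hgc⟩ := contDiff_one_iff_deriv.1 hg
  have hderiv := hasDerivAt_ite_le hfd hgd h0 h1
  refine contDiff_one_iff_deriv.2 ⟨fun y => (hderiv y).differentiableAt, ?_⟩
  rw [funext fun y => (hderiv y).deriv]
  refine Continuous.if_le hfc hgc continuous_id continuous_const ?_
  rintro y rfl
  exact h1

end Gluing

section Operators

variable {E F G : Type*} [NormedAddCommGroup E] [NormedSpace ℝ E]
  [NormedAddCommGroup F] [NormedSpace ℝ F]

/-- A local operator `C^n(E, F) → C(E, G)`: the value of `S f` at a point depends only on the germ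
of `f` there. The operator is a map on all functions, constrained only on those of class `C^n`. -/
structure IsLocalOperator [TopologicalSpace G] (n : WithTop ℕ∞) (S : (E → F) → E → G) : Prop where
  continuous_apply : ∀ ⦃f⦄, ContDiff ℝ n f → Continuous (S f)
  congr_of_eventuallyEq : ∀ ⦃f g x⦄, ContDiff ℝ n f → ContDiff ℝ n g →
    f =ᶠ[𝓝 x] g → S f x = S g x

/-- Additivity of an operator on functions of class `C^n`. -/
def IsAdditiveOperator [Add G] (n : WithTop ℕ∞) (S : (E → F) → E → G) : Prop :=
  ∀ f g, ContDiff ℝ n f → ContDiff ℝ n g → ∀ x, S (fun y => f y + g y) x = S f x + S g x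

/-- The Leibniz rule for an operator on real functions of class `C^n`; the values lie in a real
vector space `G`, on which the functions act pointwise by scalars. -/
def IsLeibnizOperator [Add G] [SMul ℝ G] (n : WithTop ℕ∞) (L : (E → ℝ) → E → G) : Prop :=
  ∀ f g, ContDiff ℝ n f → ContDiff ℝ n g → ∀ x,
    L (fun y => f y * g y) x = f x • L g x + g x • L f x

/-- The conjugate `h ↦ e⁻ʰ L (eʰ)` of an operator by the exponential. It turns the Leibniz rule into
additivity. -/
noncomputable def expConj [SMul ℝ G] (L : (E → ℝ) → E → G) (h : E → ℝ) (x : E) : G :=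
  Real.exp (-h x) • L (fun y => Real.exp (h y)) x

namespace IsLocalOperator

lemma apply_eq_of_jet_eq [TopologicalSpace G] [T2Space G] {S : (ℝ → F) → ℝ → G}
    (hS : IsLocalOperator 1 S) {f g : ℝ → F} {x : ℝ} (hf : ContDiff ℝ 1 f) (hg : ContDiff ℝ 1 g)
    (h0 : f x = g x) (h1 : deriv f x = deriv g x) : S f x = S g x := by
  set k : ℝ → F := fun y => if y ≤ x then f y else g y
  have hk : ContDiff ℝ 1 k := contDiff_one_ite_le hf hg h0 h1
  have hleft : Set.EqOn (S f) (S k) (Set.Iio x) := fun y hy =>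
    hS.congr_of_eventuallyEq hf hk <| by
      filter_upwards [Iio_mem_nhds hy] with z hz using (if_pos hz.le).symm
  have hright : Set.EqOn (S k) (S g) (Set.Ioi x) := fun y hy =>
    hS.congr_of_eventuallyEq hk hg <| by
      filter_upwards [Ioi_mem_nhds hy] with z hz using if_neg (not_le.2 hz)
  have hcont := hS.continuous_apply
  exact (hleft.closure (hcont hf) (hcont hk) (by simp)).trans
    (hright.closure (hcont hk) (hcont hg) (by simp))

variable [NormedAddCommGroup G] [NormedSpace ℝ G]

lemma exists_contDiff_forall_exists_lt_norm_apply_smul [FiniteDimensional ℝ E] {n : ℕ}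
    {S : (E → F) → E → G} (hS : IsLocalOperator n S) (hadd : IsAdditiveOperator n S) {φ : E → F}
    (hφ : ContDiff ℝ n φ) {c : ℝ} {V : Set E} (hV : IsOpen V) (hinf : V.Infinite)
    (hne : ∀ y ∈ V, S (fun z => c • φ z) y ≠ c • S φ y) :
    ∃ ψ : E → ℝ, ContDiff ℝ n ψ ∧ ∀ K : ℝ, ∃ y ∈ V, K < ‖S (fun z => ψ z • φ z) y‖ := by
  have hsmul (d : ℝ) : ContDiff ℝ n fun z => d • φ z := contDiff_const.smul hφ
  let A (y : E) : ℝ →+ G := AddMonoidHom.mk' (fun d => S (fun z => d • φ z) y) fun s t => by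
    simpa only [add_smul] using hadd _ _ (hsmul s) (hsmul t) y
  obtain ⟨U, hUne, hUopen, hUV, hUdisj⟩ := exists_seq_isOpen_pairwise_disjoint_subset hV hinf
  choose u hu using hUne
  obtain ⟨ε, hε, hinterp⟩ :=
    exists_pos_forall_exists_contDiff_eventuallyEq_const (n := n) hUopen hUdisj hu
  have hlarge (k : ℕ) : ∃ d : ℝ, ‖d‖ ≤ ε k ∧ (k : ℝ) < ‖A (u k) d‖ := by
    refine exists_norm_le_lt_norm_map_of_map_smul_ne (A (u k)) (c := c) (v := 1) ?_ (hε k) k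
    simpa [A] using hne _ (hUV k (hu k))
  choose d hdε hdlarge using hlarge
  obtain ⟨ψ, hψ, hψd⟩ := hinterp d hdε
  have hvalue (k : ℕ) : S (fun z => ψ z • φ z) (u k) = A (u k) (d k) :=
    hS.congr_of_eventuallyEq (hψ.smul hφ) (hsmul (d k)) <|
      (hψd k).mono fun y hy => by simp only [hy]
  refine ⟨ψ, hψ, fun K => ?_⟩
  obtain ⟨k, hk⟩ := exists_nat_gt K
  exact ⟨u k, hUV k (hu k), by simpa only [hvalue] using hk.trans (hdlarge k)⟩

theorem map_const_smul [FiniteDimensional ℝ E] [Nontrivial E] {n : ℕ} {S : (E → F) → E → G}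
    (hS : IsLocalOperator n S) (hadd : IsAdditiveOperator n S) {φ : E → F} (hφ : ContDiff ℝ n φ)
    (c : ℝ) (x : E) : S (fun y => c • φ y) x = c • S φ x := by
  by_contra hne
  have hne_nhds : ∀ᶠ y in 𝓝 x, S (fun z => c • φ z) y ≠ c • S φ y :=
    (isOpen_ne_fun (hS.continuous_apply (contDiff_const.smul hφ))
      ((hS.continuous_apply hφ).const_smul c)).mem_nhds hne
  obtain ⟨δ, hδ, hball⟩ := Metric.eventually_nhds_iff_ball.1 hne_nhds
  obtain ⟨ψ, hψ, hunbounded⟩ := hS.exists_contDiff_forall_exists_lt_norm_apply_smul hadd hφ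
    isOpen_ball (infinite_of_mem_nhds x (ball_mem_nhds x hδ)) hball
  obtain ⟨C, hC⟩ := (isCompact_closedBall x δ).exists_bound_of_continuousOn
    (hS.continuous_apply (hψ.smul hφ)).continuousOn
  obtain ⟨y, hy, hCy⟩ := hunbounded C
  exact hCy.not_ge (hC y (ball_subset_closedBall hy))

theorem exists_apply_eq_deriv_smul_add_smul {S : (ℝ → ℝ) → ℝ → G} (hS : IsLocalOperator 1 S)
    (hadd : IsAdditiveOperator 1 S) :
    ∃ a b : ℝ → G, Continuous a ∧ Continuous b ∧
      ∀ h : ℝ → ℝ, ContDiff ℝ 1 h → ∀ x, S h x = deriv h x • a x + h x • b x := by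
  have hone : ContDiff ℝ 1 fun _ : ℝ => (1 : ℝ) := contDiff_const
  have hid : ContDiff ℝ 1 fun y : ℝ => y := contDiff_id
  refine ⟨fun x => S (fun y => y) x - x • S (fun _ => 1) x, S fun _ => 1,
    (hS.continuous_apply hid).sub (continuous_id.smul (hS.continuous_apply hone)),
    hS.continuous_apply hone, fun h hh x => ?_⟩
  set p := deriv h x
  set q := h x - p * x
  have hp : ContDiff ℝ 1 fun y : ℝ => p • y := hid.const_smul p
  have hq : ContDiff ℝ 1 fun _ : ℝ => q • (1 : ℝ) := hone.const_smul q
  have hderiv : deriv h x = deriv (fun y => p • y + q • (1 : ℝ)) x := by simp [p]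
  calc S h x = S (fun y => p • y + q • (1 : ℝ)) x :=
        hS.apply_eq_of_jet_eq hh (hp.add hq) (by simp [q]) hderiv
    _ = p • S (fun y => y) x + q • S (fun _ => 1) x := by
        rw [hadd _ _ hp hq, map_const_smul (n := 1) hS hadd hid,
          map_const_smul (n := 1) hS hadd hone]
    _ = p • (S (fun y => y) x - x • S (fun _ => 1) x) + h x • S (fun _ => 1) x := by
        module

end IsLocalOperator

namespace IsLeibnizOperator

variable [AddCommGroup G] [Module ℝ G] {n : WithTop ℕ∞} {L : (E → ℝ) → E → G}

lemma apply_zero (hL : IsLeibnizOperator n L) (x : E) : L (fun _ => 0) x = 0 := by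
  simpa using hL (fun _ => 0) (fun _ => 0) contDiff_const contDiff_const x

lemma apply_one (hL : IsLeibnizOperator n L) (x : E) : L (fun _ => 1) x = 0 := by
  simpa using hL (fun _ => 1) (fun _ => 1) contDiff_const contDiff_const x

lemma apply_neg_one (hL : IsLeibnizOperator n L) (x : E) : L (fun _ => -1) x = 0 := by
  have hsq := hL (fun _ => -1) (fun _ => -1) contDiff_const contDiff_const x
  simp only [mul_neg, mul_one, neg_neg, hL.apply_one, neg_smul, one_smul] at hsq
  have htwo : (2 : ℝ) • L (fun _ => -1) x = 0 := by
    rw [two_smul, ← neg_eq_zero, neg_add, ← hsq]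
  exact (smul_eq_zero_iff_right two_ne_zero).1 htwo

lemma apply_neg (hL : IsLeibnizOperator n L) {f : E → ℝ} (hf : ContDiff ℝ n f) (x : E) :
    L (fun y => -f y) x = -L f x := by
  simpa [hL.apply_neg_one] using hL (fun _ => -1) f contDiff_const hf x

lemma isAdditiveOperator_expConj (hL : IsLeibnizOperator n L) :
    IsAdditiveOperator n (expConj L) := by
  intro f g hf hg x
  have hcancel (t : ℝ) : Real.exp (-t) * Real.exp t = 1 := by
    rw [← Real.exp_add, neg_add_cancel, Real.exp_zero]
  simp only [expConj, Real.exp_add, neg_add, hL _ _ hf.exp hg.exp x, smul_add, smul_smul]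
  rw [add_comm, mul_assoc, hcancel, mul_one, mul_right_comm, hcancel, one_mul]

lemma congr_of_eventuallyEq [HasContDiffBump E] {n : ℕ∞} (hL : IsLeibnizOperator n L)
    {f g : E → ℝ} {x : E} (hf : ContDiff ℝ n f) (hg : ContDiff ℝ n g) (hfg : f =ᶠ[𝓝 x] g) :
    L f x = L g x := by
  obtain ⟨φ, hφ⟩ := exists_contDiffBump_support_subset hfg
  have hmul : (fun y => f y * φ y) = fun y => g y * φ y := by
    funext y
    by_cases hy : φ y = 0
    · rw [hy, mul_zero, mul_zero]
    · rw [show f y = g y from hφ hy]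
  have hx : φ x = 1 := φ.eventuallyEq_one.eq_of_nhds
  have hf_mul := hL f φ hf φ.contDiff x
  rw [hmul, hL g φ hg φ.contDiff x, hx, hfg.eq_of_nhds, one_smul, one_smul] at hf_mul
  exact (add_left_cancel hf_mul).symm

lemma isLocalOperator [TopologicalSpace G] [HasContDiffBump E] {n : ℕ∞}
    (hL : IsLeibnizOperator n L) (hcont : ∀ f, ContDiff ℝ n f → Continuous (L f)) :
    IsLocalOperator n L :=
  ⟨hcont, fun _ _ _ => hL.congr_of_eventuallyEq⟩

end IsLeibnizOperator

lemma isLocalOperator_expConj [TopologicalSpace G] [SMul ℝ G] [ContinuousSMul ℝ G]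
    {n : WithTop ℕ∞} {L : (E → ℝ) → E → G} (hL : IsLocalOperator n L) :
    IsLocalOperator n (expConj L) where
  continuous_apply h hh := hh.neg.exp.continuous.smul (hL.continuous_apply hh.exp)
  congr_of_eventuallyEq f g x hf hg hfg := by
    have hexp := hL.congr_of_eventuallyEq hf.exp hg.exp (hfg.fun_comp Real.exp)
    simp only [expConj, hexp, hfg.eq_of_nhds]

end Operators

section RealLine

variable {G : Type*} [NormedAddCommGroup G] [NormedSpace ℝ G] {L : (ℝ → ℝ) → ℝ → G}
  {a b : ℝ → G} {f : ℝ → ℝ} {x : ℝ}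

/-- The normal form `f ↦ f' a + f log|f| b` of a Leibniz operator on the line. The coefficients `a`
and `b` take values in `G`, so they stand on the right of the scalars. -/
noncomputable def derivEntropy (a b : ℝ → G) (f : ℝ → ℝ) (x : ℝ) : G :=
  deriv f x • a x + (f x * Real.log |f x|) • b x

lemma derivEntropy_neg (a b : ℝ → G) (f : ℝ → ℝ) (x : ℝ) :
    derivEntropy a b (fun y => -f y) x = -derivEntropy a b f x := by
  simp only [derivEntropy, deriv.fun_neg, abs_neg]
  module

lemma continuous_derivEntropy (ha : Continuous a) (hb : Continuous b) (hf : ContDiff ℝ 1 f) :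
    Continuous (derivEntropy a b f) := by
  have hentropy : Continuous fun x => f x * Real.log |f x| := by
    simpa only [Real.log_abs, comp_def] using Real.continuous_mul_log.comp hf.continuous
  exact (hf.continuous_deriv_one.smul ha).add (hentropy.smul hb)

lemma IsLocalOperator.apply_eq_derivEntropy_of_pos (hloc : IsLocalOperator 1 L)
    (hab : ∀ h : ℝ → ℝ, ContDiff ℝ 1 h → ∀ x, expConj L h x = deriv h x • a x + h x • b x)
    (hf : ContDiff ℝ 1 f) (hx : 0 < f x) : L f x = derivEntropy a b f x := by
  set h : ℝ → ℝ := fun y => Real.log (f x) + deriv f x / f x * (y - x)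
  have hh : ContDiff ℝ 1 h := by fun_prop
  have hhx : h x = Real.log (f x) := by simp [h]
  have hderiv : deriv h x = deriv f x / f x := by simp [h]
  have hexp : Real.exp (h x) = f x := by rw [hhx, Real.exp_log hx]
  have hderiv_exp : deriv (fun y => Real.exp (h y)) x = deriv f x := by
    rw [deriv_exp (hh.differentiable one_ne_zero x), hexp, hderiv, mul_div_cancel₀ _ hx.ne']
  calc L f x = L (fun y => Real.exp (h y)) x :=
        hloc.apply_eq_of_jet_eq hf hh.exp hexp.symm hderiv_exp.symm
    _ = f x • expConj L h x := by
        rw [expConj, smul_smul, ← hexp, ← Real.exp_add, add_neg_cancel, Real.exp_zero, one_smul]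
    _ = derivEntropy a b f x := by
        rw [hab h hh, hderiv, hhx, smul_add, smul_smul, smul_smul, mul_div_cancel₀ _ hx.ne',
          derivEntropy, Real.log_abs]

namespace IsLeibnizOperator

lemma apply_eq_derivEntropy_of_ne_zero (hL : IsLeibnizOperator 1 L) (hloc : IsLocalOperator 1 L)
    (hab : ∀ h : ℝ → ℝ, ContDiff ℝ 1 h → ∀ x, expConj L h x = deriv h x • a x + h x • b x)
    (hf : ContDiff ℝ 1 f) (hx : f x ≠ 0) : L f x = derivEntropy a b f x := by
  rcases hx.lt_or_gt with hneg | hpos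
  · have hL_neg := hloc.apply_eq_derivEntropy_of_pos hab hf.neg (neg_pos.2 hneg)
    rwa [hL.apply_neg hf, derivEntropy_neg, neg_inj] at hL_neg
  · exact hloc.apply_eq_derivEntropy_of_pos hab hf hpos

lemma apply_eq_derivEntropy (hL : IsLeibnizOperator 1 L) (hloc : IsLocalOperator 1 L)
    (ha : Continuous a) (hb : Continuous b)
    (hab : ∀ h : ℝ → ℝ, ContDiff ℝ 1 h → ∀ x, expConj L h x = deriv h x • a x + h x • b x)
    (hf : ContDiff ℝ 1 f) : L f x = derivEntropy a b f x := by
  by_cases hjet : f x = 0 ∧ deriv f x = 0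
  · obtain ⟨h0, h1⟩ := hjet
    rw [hloc.apply_eq_of_jet_eq hf contDiff_const h0 (by rw [h1, deriv_const]), hL.apply_zero]
    simp [derivEntropy, h0, h1]
  have hne : ∀ᶠ y in 𝓝[≠] x, f y ≠ 0 := by
    by_cases h0 : f x = 0
    · exact (hf.differentiable one_ne_zero x).hasDerivAt.eventually_ne fun h1 => hjet ⟨h0, h1⟩
    · exact (hf.continuous.continuousAt.eventually_ne h0).filter_mono nhdsWithin_le_nhds
  have heq : L f =ᶠ[𝓝[≠] x] derivEntropy a b f :=
    hne.mono fun y hy => hL.apply_eq_derivEntropy_of_ne_zero hloc hab hf hy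
  exact (((hloc.continuous_apply hf).continuousAt.eventuallyEq_nhds_iff_eventuallyEq_nhdsNE
    (continuous_derivEntropy ha hb hf).continuousAt).1 heq).eq_of_nhds

end IsLeibnizOperator

theorem stmt11_general (hcont : ∀ f : ℝ → ℝ, ContDiff ℝ 1 f → Continuous (L f))
    (hleibniz : IsLeibnizOperator 1 L) :
    ∃ a b : ℝ → G, Continuous a ∧ Continuous b ∧ ∀ f : ℝ → ℝ, ContDiff ℝ 1 f → ∀ x : ℝ,
      L f x = deriv f x • a x + (f x * Real.log |f x|) • b x := by
  have hloc : IsLocalOperator 1 L := hleibniz.isLocalOperator (n := 1) hcont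
  obtain ⟨a, b, ha, hb, hab⟩ := (isLocalOperator_expConj hloc).exists_apply_eq_deriv_smul_add_smul
    hleibniz.isAdditiveOperator_expConj
  exact ⟨a, b, ha, hb, fun f hf x => hleibniz.apply_eq_derivEntropy hloc ha hb hab hf⟩

end RealLine

theorem stmt11 (L : (ℝ → ℝ) → (ℝ → ℝ))
    -- `L` maps `C¹(ℝ)` into `C(ℝ)` (no linearity or continuity of `L` is assumed)
    (hmaps : ∀ f : ℝ → ℝ, ContDiff ℝ 1 f → Continuous (L f))
    -- the Leibniz rule
    (hleibniz : ∀ f g : ℝ → ℝ, ContDiff ℝ 1 f → ContDiff ℝ 1 g →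
      L (fun x => f x * g x) = fun x => f x * L g x + g x * L f x) :
    ∃ a b : ℝ → ℝ, Continuous a ∧ Continuous b ∧
      ∀ f : ℝ → ℝ, ContDiff ℝ 1 f → ∀ x : ℝ,
        -- `f x * Real.log |f x|` is `0` when `f x = 0`, since `Real.log 0 = 0`
        L f x = a x * deriv f x + b x * (f x * Real.log |f x|) := by
  simpa only [smul_eq_mul, mul_comm] using
    stmt11_general hmaps fun f g hf hg x => congrFun (hleibniz f g hf hg) x
end

section
/- There exist constants ε > 0 and C < ∞ with the following property. Let φ : ℝ → ℝ be locally integrable and suppose that for every bounded interval I = [α, β] with α < β one has (1/|I|)·∫_I |φ(x) − φ_I| dx ≤ ε, where φ_I = (1/|I|)·∫_I φ(x) dx and |I| = β − α (that is, the BMO seminorm of φ is at most ε). Then the weight w = e^φ satisfies the A₂ condition with constant C: for every bounded interval I with |I| > 0, e^φ and e^{−φ} are integrable on I and ((1/|I|)·∫_I e^{φ(x)} dx)·((1/|I|)·∫_I e^{−φ(x)} dx) ≤ C. -/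
open MeasureTheory

/-!
If the BMO seminorm `δ` is less than `e⁻²`, then `φ` satisfies a reverse Jensen inequality
`⨍ e^φ ≤ K e^(⨍ φ)` on every interval, and multiplying it by the one for `-φ` gives the `A₂` bound,
because the factors `e^(± ⨍ φ)` cancel.

By Lebesgue differentiation and Fatou's lemma, `φ` may be replaced on an interval `I` by its dyadic
averages of depth `n`, provided that the constant does not depend on `n`. The induction on `n`
proves more: whenever `∫_I |φ - c| ≤ |I|`, the exponential of the dyadic averages has integral at
most `∫_I e^c (e + e² K |φ - c|)`. This majorant is additive in `I`, so the bound passes from the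
two halves of `I` to `I`. On a half `J` the constant `c` only satisfies `∫_J |φ - c| ≤ 2 |J|`. If
this integral exceeds `|J|`, then `c` is replaced by the average of `φ` over `J`: the factor `e^c`
grows by at most `e²`, while the oscillation drops from at least `|J|` to at most `δ |J|`, and `K`
is chosen so that the integral of the majorant does not increase.
-/

section IntervalAverage

variable {E : Type*} [NormedAddCommGroup E] [NormedSpace ℝ E] {f : ℝ → E} {a b δ : ℝ}

lemma mul_norm_average_sub_le_integral_norm_sub [CompleteSpace E] (hab : a < b)
    (hf : IntervalIntegrable f volume a b) (c : E) :
    (b - a) * ‖(⨍ x in a..b, f x) - c‖ ≤ ∫ x in a..b, ‖f x - c‖ := by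
  have hba : 0 < b - a := sub_pos.2 hab
  calc (b - a) * ‖(⨍ x in a..b, f x) - c‖ = ‖(b - a) • ((⨍ x in a..b, f x) - c)‖ := by
        rw [norm_smul, Real.norm_of_nonneg hba.le]
    _ = ‖∫ x in a..b, (f x - c)‖ := by
        rw [intervalIntegral.integral_sub hf intervalIntegrable_const,
          intervalIntegral.integral_const, smul_sub, interval_average_eq, smul_inv_smul₀ hba.ne']
    _ ≤ ∫ x in a..b, ‖f x - c‖ := intervalIntegral.norm_integral_le_integral_norm hab.le

/-- The BMO seminorm of `f` is at most `δ`. Integrability is not part of the notion, so this is only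
meaningful for locally integrable `f`. -/
def HasBMOSeminormLE (f : ℝ → E) (δ : ℝ) : Prop :=
  ∀ a b : ℝ, a < b → ⨍ x in a..b, ‖f x - ⨍ y in a..b, f y‖ ≤ δ

namespace HasBMOSeminormLE

protected lemma neg (hf : HasBMOSeminormLE f δ) : HasBMOSeminormLE (fun x => -f x) δ := by
  intro a b hab
  simpa only [average_neg, neg_sub_neg, norm_sub_rev] using hf a b hab

lemma integral_norm_sub_average_le (hf : HasBMOSeminormLE f δ) (hab : a < b) :
    ∫ x in a..b, ‖f x - ⨍ y in a..b, f y‖ ≤ δ * (b - a) := by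
  rw [← div_le_iff₀ (sub_pos.2 hab), ← interval_average_eq_div]
  exact hf a b hab

lemma integral_norm_sub_average_le_sub (hf : HasBMOSeminormLE f δ) (hδ : δ ≤ 1) (hab : a < b) :
    ∫ x in a..b, ‖f x - ⨍ y in a..b, f y‖ ≤ b - a :=
  (hf.integral_norm_sub_average_le hab).trans (mul_le_of_le_one_left (sub_pos.2 hab).le hδ)

end HasBMOSeminormLE

lemma ae_tendsto_intervalAverage [CompleteSpace E] (hf : LocallyIntegrable f) :
    ∀ᵐ x, ∀ {ι : Type*} {l : Filter ι} (a b : ι → ℝ),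
      Filter.Tendsto (fun i => b i - a i) l (nhds 0) → (∀ i, x ∈ Set.Ioc (a i) (b i)) →
      Filter.Tendsto (fun i => ⨍ y in a i..b i, f y) l (nhds (f x)) := by
  filter_upwards [IsUnifLocDoublingMeasure.ae_tendsto_average volume hf 1]
    with x hx ι l a b hlim hmem
  have hlt (i : ι) : a i < b i := (hmem i).1.trans_le (hmem i).2
  have hradius : Filter.Tendsto (fun i => (b i - a i) / 2) l (nhdsWithin 0 (Set.Ioi 0)) :=
    tendsto_nhdsWithin_iff.2
      ⟨by simpa only [zero_div] using hlim.div_const 2,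
        .of_forall fun i => half_pos (sub_pos.2 (hlt i))⟩
  have hball : ∀ i, x ∈ Metric.closedBall ((a i + b i) / 2) (1 * ((b i - a i) / 2)) := by
    intro i
    rw [one_mul, ← Real.Icc_eq_closedBall]
    exact Set.Ioc_subset_Icc_self (hmem i)
  refine (hx _ _ hradius (.of_forall hball)).congr fun i => ?_
  rw [← Real.Icc_eq_closedBall, Set.uIoc_of_le (hlt i).le]
  exact setAverage_congr Ioc_ae_eq_Icc.symm

end IntervalAverage

section DyadicAverage

variable {E : Type*} [NormedAddCommGroup E] [NormedSpace ℝ E]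

/-- The dyadic averages of `f` of depth `n` below `(a, b]`: for `x` in `(a, b]`, the value at `x` is
the average of `f` over the one of the `2 ^ n` congruent half-open subintervals that contains `x`.
Outside `(a, b]` the value is that of the nearest subinterval. -/
noncomputable def dyadicAverage (f : ℝ → E) : ℕ → ℝ → ℝ → ℝ → E
  | 0, a, b, _ => ⨍ y in a..b, f y
  | n + 1, a, b, x =>
    if x ≤ (a + b) / 2 then dyadicAverage f n a ((a + b) / 2) x
    else dyadicAverage f n ((a + b) / 2) b x

lemma stronglyMeasurable_dyadicAverage (f : ℝ → E) (n : ℕ) (a b : ℝ) :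
    StronglyMeasurable (dyadicAverage f n a b) := by
  induction n generalizing a b with
  | zero => exact stronglyMeasurable_const
  | succ n ih => exact (ih _ _).ite measurableSet_Iic (ih _ _)

lemma exists_dyadicAverage_eq_average (f : ℝ → E) (n : ℕ) {a b x : ℝ} (hx : x ∈ Set.Ioc a b) :
    ∃ p q, q - p = (b - a) / 2 ^ n ∧ x ∈ Set.Ioc p q ∧
      dyadicAverage f n a b x = ⨍ y in p..q, f y := by
  induction n generalizing a b with
  | zero => exact ⟨a, b, by simp, hx, rfl⟩
  | succ n ih =>
    rcases le_or_gt x ((a + b) / 2) with hxm | hxm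
    · obtain ⟨p, q, hpq, hmem, heq⟩ := ih ⟨hx.1, hxm⟩
      exact ⟨p, q, by rw [hpq]; ring, hmem, by rw [dyadicAverage, if_pos hxm, heq]⟩
    · obtain ⟨p, q, hpq, hmem, heq⟩ := ih ⟨hxm, hx.2⟩
      exact ⟨p, q, by rw [hpq]; ring, hmem, by rw [dyadicAverage, if_neg hxm.not_ge, heq]⟩

lemma ae_tendsto_dyadicAverage [CompleteSpace E] {f : ℝ → E} (hf : LocallyIntegrable f)
    (a b : ℝ) :
    ∀ᵐ x ∂volume.restrict (Set.Ioc a b),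
      Filter.Tendsto (fun n => dyadicAverage f n a b x) Filter.atTop (nhds (f x)) := by
  rw [ae_restrict_iff' measurableSet_Ioc]
  filter_upwards [ae_tendsto_intervalAverage hf] with x hx hxab
  choose p q hpq hmem heq using fun n => exists_dyadicAverage_eq_average f n hxab
  have hlen : Filter.Tendsto (fun n => q n - p n) Filter.atTop (nhds 0) := by
    simp only [hpq]
    exact tendsto_const_nhds.div_atTop (tendsto_pow_atTop_atTop_of_one_lt one_lt_two)
  simpa only [heq] using hx p q hlen hmem

lemma lintegral_comp_dyadicAverage_succ (f : ℝ → E) (g : E → ENNReal) (n : ℕ) {a b : ℝ}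
    (hab : a < b) :
    ∫⁻ x in Set.Ioc a b, g (dyadicAverage f (n + 1) a b x) =
      (∫⁻ x in Set.Ioc a ((a + b) / 2), g (dyadicAverage f n a ((a + b) / 2) x)) +
        ∫⁻ x in Set.Ioc ((a + b) / 2) b, g (dyadicAverage f n ((a + b) / 2) b x) := by
  rw [← Set.Ioc_union_Ioc_eq_Ioc (left_lt_add_div_two.2 hab).le (add_div_two_lt_right.2 hab).le,
    lintegral_union measurableSet_Ioc (Set.Ioc_disjoint_Ioc_of_le le_rfl)]
  congr 1 <;> refine setLIntegral_congr_fun measurableSet_Ioc fun x hx => ?_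
  · simp only [dyadicAverage, if_pos hx.2]
  · simp only [dyadicAverage, if_neg hx.1.not_ge]

end DyadicAverage

section ReverseJensen

variable {φ : ℝ → ℝ} {a b c δ : ℝ}

/-- The constant `K` of the reverse Jensen inequality `⨍ e^φ ≤ K e^(⨍ φ)` for functions whose BMO
seminorm is at most `δ < e⁻²`; it is the solution of `e + e² K δ = K`. -/
noncomputable def reverseJensenConst (δ : ℝ) : ℝ := Real.exp 1 / (1 - Real.exp 2 * δ)

lemma one_sub_exp_two_mul_pos (hδ : δ < Real.exp (-2)) : 0 < 1 - Real.exp 2 * δ := by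
  rw [Real.exp_neg, ← one_div, lt_div_iff₀' (Real.exp_pos 2)] at hδ
  exact sub_pos.2 hδ

lemma le_one_of_lt_exp_neg_two (hδ : δ < Real.exp (-2)) : δ ≤ 1 :=
  hδ.le.trans (Real.exp_le_one_iff.2 (by norm_num))

lemma reverseJensenConst_pos (hδ : δ < Real.exp (-2)) : 0 < reverseJensenConst δ :=
  div_pos (Real.exp_pos 1) (one_sub_exp_two_mul_pos hδ)

lemma reverseJensenConst_fixedPoint (hδ : δ < Real.exp (-2)) :
    Real.exp 1 + Real.exp 2 * reverseJensenConst δ * δ = reverseJensenConst δ := by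
  have hpos := one_sub_exp_two_mul_pos hδ
  rw [reverseJensenConst]
  field_simp
  ring

/-- The function `e^c (e + e² K |φ - c|)`, with `K = reverseJensenConst δ`, whose integral controls
that of the exponential of the dyadic averages of `φ` on intervals with `⨍ |φ - c| ≤ 1`. -/
noncomputable def expMajorant (φ : ℝ → ℝ) (δ c x : ℝ) : ℝ :=
  Real.exp c * (Real.exp 1 + Real.exp 2 * reverseJensenConst δ * |φ x - c|)

lemma expMajorant_nonneg (hδ : δ < Real.exp (-2)) (φ : ℝ → ℝ) (c x : ℝ) :
    0 ≤ expMajorant φ δ c x := by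
  have hK := reverseJensenConst_pos hδ
  unfold expMajorant
  positivity

lemma intervalIntegrable_expMajorant (hφ : IntervalIntegrable φ volume a b) (δ c : ℝ) :
    IntervalIntegrable (expMajorant φ δ c) volume a b :=
  (intervalIntegrable_const.add
    ((hφ.sub intervalIntegrable_const).abs.const_mul _)).const_mul _

lemma integral_expMajorant (hφ : IntervalIntegrable φ volume a b) (δ c : ℝ) :
    ∫ x in a..b, expMajorant φ δ c x = Real.exp c *
      (Real.exp 1 * (b - a) +
        Real.exp 2 * reverseJensenConst δ * ∫ x in a..b, |φ x - c|) := by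
  simp only [expMajorant]
  rw [intervalIntegral.integral_const_mul, intervalIntegral.integral_add intervalIntegrable_const
      ((hφ.sub intervalIntegrable_const).abs.const_mul _),
    intervalIntegral.integral_const, intervalIntegral.integral_const_mul, smul_eq_mul, mul_comm]
  ring

lemma exp_average_le_of_integral_abs_sub_le (hab : a < b) (hφ : IntervalIntegrable φ volume a b)
    {r : ℝ} (hr : ∫ x in a..b, |φ x - c| ≤ r * (b - a)) :
    Real.exp (⨍ x in a..b, φ x) ≤ Real.exp c * Real.exp r := by
  have hmul : (b - a) * |(⨍ x in a..b, φ x) - c| ≤ (b - a) * r :=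
    (mul_norm_average_sub_le_integral_norm_sub hab hφ c).trans (hr.trans_eq (mul_comm _ _))
  have habs : |(⨍ x in a..b, φ x) - c| ≤ r := le_of_mul_le_mul_left hmul (sub_pos.2 hab)
  rw [← Real.exp_add, Real.exp_le_exp, ← sub_le_iff_le_add']
  exact (le_abs_self _).trans habs

lemma exp_average_mul_le_integral_expMajorant (hδ : δ < Real.exp (-2)) (hab : a < b)
    (hφ : IntervalIntegrable φ volume a b) (hc : ∫ x in a..b, |φ x - c| ≤ b - a) :
    Real.exp (⨍ x in a..b, φ x) * (b - a) ≤ ∫ x in a..b, expMajorant φ δ c x := by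
  have := sub_pos.2 hab
  have hK := reverseJensenConst_pos hδ
  have hosc : 0 ≤ ∫ x in a..b, |φ x - c| :=
    intervalIntegral.integral_nonneg hab.le fun _ _ => abs_nonneg _
  calc Real.exp (⨍ x in a..b, φ x) * (b - a)
      ≤ Real.exp c * Real.exp 1 * (b - a) := by
        gcongr
        exact exp_average_le_of_integral_abs_sub_le hab hφ (by rwa [one_mul])
    _ = Real.exp c * (Real.exp 1 * (b - a)) := mul_assoc _ _ _
    _ ≤ Real.exp c * (Real.exp 1 * (b - a) +
          Real.exp 2 * reverseJensenConst δ * ∫ x in a..b, |φ x - c|) := by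
        gcongr
        exact le_add_of_nonneg_right (by positivity)
    _ = ∫ x in a..b, expMajorant φ δ c x := (integral_expMajorant hφ δ c).symm

lemma integral_expMajorant_average_le (hδ : δ < Real.exp (-2)) (hB : HasBMOSeminormLE φ δ)
    (hab : a < b) (hφ : IntervalIntegrable φ volume a b) :
    ∫ x in a..b, expMajorant φ δ (⨍ y in a..b, φ y) x ≤
      reverseJensenConst δ * Real.exp (⨍ x in a..b, φ x) * (b - a) := by
  have hK := reverseJensenConst_pos hδ
  calc ∫ x in a..b, expMajorant φ δ (⨍ y in a..b, φ y) x
      = Real.exp (⨍ x in a..b, φ x) * (Real.exp 1 * (b - a) +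
          Real.exp 2 * reverseJensenConst δ * ∫ x in a..b, |φ x - ⨍ y in a..b, φ y|) :=
        integral_expMajorant hφ δ _
    _ ≤ Real.exp (⨍ x in a..b, φ x) * (Real.exp 1 * (b - a) +
          Real.exp 2 * reverseJensenConst δ * (δ * (b - a))) := by
        gcongr
        exact hB.integral_norm_sub_average_le hab
    _ = (Real.exp 1 + Real.exp 2 * reverseJensenConst δ * δ) *
          Real.exp (⨍ x in a..b, φ x) * (b - a) := by ring
    _ = reverseJensenConst δ * Real.exp (⨍ x in a..b, φ x) * (b - a) := by
        rw [reverseJensenConst_fixedPoint hδ]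

lemma integral_expMajorant_average_le_integral_expMajorant (hδ : δ < Real.exp (-2))
    (hB : HasBMOSeminormLE φ δ) (hab : a < b) (hφ : IntervalIntegrable φ volume a b)
    (hlower : b - a ≤ ∫ x in a..b, |φ x - c|) (hupper : ∫ x in a..b, |φ x - c| ≤ 2 * (b - a)) :
    ∫ x in a..b, expMajorant φ δ (⨍ y in a..b, φ y) x ≤ ∫ x in a..b, expMajorant φ δ c x := by
  have := sub_pos.2 hab
  have hK := reverseJensenConst_pos hδ
  calc ∫ x in a..b, expMajorant φ δ (⨍ y in a..b, φ y) x
      ≤ reverseJensenConst δ * Real.exp (⨍ x in a..b, φ x) * (b - a) :=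
        integral_expMajorant_average_le hδ hB hab hφ
    _ ≤ reverseJensenConst δ * (Real.exp c * Real.exp 2) * ∫ x in a..b, |φ x - c| := by
        gcongr
        exact exp_average_le_of_integral_abs_sub_le hab hφ hupper
    _ = Real.exp c * (Real.exp 2 * reverseJensenConst δ * ∫ x in a..b, |φ x - c|) := by ring
    _ ≤ Real.exp c * (Real.exp 1 * (b - a) +
          Real.exp 2 * reverseJensenConst δ * ∫ x in a..b, |φ x - c|) := by
        gcongr
        exact le_add_of_nonneg_left (by positivity)
    _ = ∫ x in a..b, expMajorant φ δ c x := (integral_expMajorant hφ δ c).symm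

lemma lintegral_exp_dyadicAverage_le (hδ : δ < Real.exp (-2)) (hφ : LocallyIntegrable φ)
    (hB : HasBMOSeminormLE φ δ) (n : ℕ) (hab : a < b) (hc : ∫ x in a..b, |φ x - c| ≤ b - a) :
    ∫⁻ x in Set.Ioc a b, ENNReal.ofReal (Real.exp (dyadicAverage φ n a b x)) ≤
      ENNReal.ofReal (∫ x in a..b, expMajorant φ δ c x) := by
  have hint (p q : ℝ) : IntervalIntegrable φ volume p q :=
    (hφ.integrableOn_isCompact isCompact_uIcc).intervalIntegrable
  induction n generalizing a b c with
  | zero =>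
    simp only [dyadicAverage, setLIntegral_const, Real.volume_Ioc]
    rw [← ENNReal.ofReal_mul (Real.exp_pos _).le]
    exact ENNReal.ofReal_le_ofReal
      (exp_average_mul_le_integral_expMajorant hδ hab (hint a b) hc)
  | succ n ih =>
    have hhalf {p q : ℝ} (hpq : p < q) (hosc : ∫ x in p..q, |φ x - c| ≤ 2 * (q - p)) :
        ∫⁻ x in Set.Ioc p q, ENNReal.ofReal (Real.exp (dyadicAverage φ n p q x)) ≤
          ENNReal.ofReal (∫ x in p..q, expMajorant φ δ c x) := by
      rcases le_total (∫ x in p..q, |φ x - c|) (q - p) with hsmall | hlarge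
      · exact ih hpq hsmall
      · exact (ih hpq
          (hB.integral_norm_sub_average_le_sub (le_one_of_lt_exp_neg_two hδ) hpq)).trans
          (ENNReal.ofReal_le_ofReal (integral_expMajorant_average_le_integral_expMajorant
            hδ hB hpq (hint p q) hlarge hosc))
    have ham : a < (a + b) / 2 := left_lt_add_div_two.2 hab
    have hmb : (a + b) / 2 < b := add_div_two_lt_right.2 hab
    have hosc {p q : ℝ} (hap : a ≤ p) (hpq : p ≤ q) (hqb : q ≤ b) :
        ∫ x in p..q, |φ x - c| ≤ b - a :=
      (intervalIntegral.integral_mono_interval hap hpq hqb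
        (.of_forall fun _ => abs_nonneg _)
        ((hint a b).sub intervalIntegrable_const).abs).trans hc
    have hmaj {p q : ℝ} (hpq : p ≤ q) : 0 ≤ ∫ x in p..q, expMajorant φ δ c x :=
      intervalIntegral.integral_nonneg hpq fun _ _ => expMajorant_nonneg hδ φ c _
    have hintMaj (p q : ℝ) : IntervalIntegrable (expMajorant φ δ c) volume p q :=
      intervalIntegrable_expMajorant (hint p q) δ c
    rw [lintegral_comp_dyadicAverage_succ φ (fun y => ENNReal.ofReal (Real.exp y)) n hab,
      ← intervalIntegral.integral_add_adjacent_intervals (hintMaj a ((a + b) / 2)) (hintMaj _ b),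
      ENNReal.ofReal_add (hmaj ham.le) (hmaj hmb.le)]
    exact add_le_add
      (hhalf ham ((hosc le_rfl ham.le hmb.le).trans (by linarith)))
      (hhalf hmb ((hosc ham.le hmb.le le_rfl).trans (by linarith)))

lemma lintegral_exp_le (hδ : δ < Real.exp (-2)) (hφ : LocallyIntegrable φ)
    (hB : HasBMOSeminormLE φ δ) (hab : a < b) :
    ∫⁻ x in Set.Ioc a b, ENNReal.ofReal (Real.exp (φ x)) ≤
      ENNReal.ofReal (reverseJensenConst δ * Real.exp (⨍ x in a..b, φ x) * (b - a)) := by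
  have hdyadic (n : ℕ) :
      ∫⁻ x in Set.Ioc a b, ENNReal.ofReal (Real.exp (dyadicAverage φ n a b x)) ≤
        ENNReal.ofReal (reverseJensenConst δ * Real.exp (⨍ x in a..b, φ x) * (b - a)) :=
    (lintegral_exp_dyadicAverage_le hδ hφ hB n hab
      (hB.integral_norm_sub_average_le_sub (le_one_of_lt_exp_neg_two hδ) hab)).trans
      (ENNReal.ofReal_le_ofReal (integral_expMajorant_average_le hδ hB hab
        (hφ.integrableOn_isCompact isCompact_uIcc).intervalIntegrable))
  have hlim : ∀ᵐ x ∂volume.restrict (Set.Ioc a b), Filter.liminf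
      (fun n => ENNReal.ofReal (Real.exp (dyadicAverage φ n a b x))) Filter.atTop =
        ENNReal.ofReal (Real.exp (φ x)) := by
    filter_upwards [ae_tendsto_dyadicAverage hφ a b] with x hx
    exact (ENNReal.tendsto_ofReal hx.rexp).liminf_eq
  rw [← lintegral_congr_ae hlim]
  exact (lintegral_liminf_le fun n =>
    (stronglyMeasurable_dyadicAverage φ n a b).measurable.exp.ennreal_ofReal).trans
    (Filter.liminf_le_of_frequently_le' (.of_forall hdyadic))

lemma integrableOn_exp (hδ : δ < Real.exp (-2)) (hφ : LocallyIntegrable φ)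
    (hB : HasBMOSeminormLE φ δ) (hab : a < b) :
    IntegrableOn (fun x => Real.exp (φ x)) (Set.Ioc a b) := by
  refine ⟨Real.continuous_exp.comp_aestronglyMeasurable hφ.aestronglyMeasurable.restrict, ?_⟩
  rw [hasFiniteIntegral_iff_ofReal (.of_forall fun x => (Real.exp_pos (φ x)).le)]
  exact (lintegral_exp_le hδ hφ hB hab).trans_lt ENNReal.ofReal_lt_top

theorem average_exp_le_mul_exp_average (hδ : δ < Real.exp (-2)) (hφ : LocallyIntegrable φ)
    (hB : HasBMOSeminormLE φ δ) (hab : a < b) :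
    ⨍ x in a..b, Real.exp (φ x) ≤ reverseJensenConst δ * Real.exp (⨍ x in a..b, φ x) := by
  have hba : 0 < b - a := sub_pos.2 hab
  have hK := reverseJensenConst_pos hδ
  rw [interval_average_eq_div, div_le_iff₀ hba, intervalIntegral.integral_of_le hab.le,
    ← ENNReal.ofReal_le_ofReal_iff (by positivity),
    ofReal_integral_eq_lintegral_ofReal (integrableOn_exp hδ hφ hB hab)
      (.of_forall fun x => (Real.exp_pos (φ x)).le)]
  exact lintegral_exp_le hδ hφ hB hab

theorem average_exp_mul_average_exp_neg_le (hδ : δ < Real.exp (-2)) (hφ : LocallyIntegrable φ)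
    (hB : HasBMOSeminormLE φ δ) (hab : a < b) :
    (⨍ x in a..b, Real.exp (φ x)) * ⨍ x in a..b, Real.exp (-φ x) ≤ reverseJensenConst δ ^ 2 := by
  have hK := reverseJensenConst_pos hδ
  have hnonneg : 0 ≤ ⨍ x in a..b, Real.exp (-φ x) :=
    integral_nonneg fun _ => (Real.exp_pos _).le
  calc (⨍ x in a..b, Real.exp (φ x)) * ⨍ x in a..b, Real.exp (-φ x)
      ≤ (reverseJensenConst δ * Real.exp (⨍ x in a..b, φ x)) *
          (reverseJensenConst δ * Real.exp (⨍ x in a..b, -φ x)) := by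
        gcongr
        · exact average_exp_le_mul_exp_average hδ hφ hB hab
        · exact average_exp_le_mul_exp_average hδ hφ.neg hB.neg hab
    _ = reverseJensenConst δ ^ 2 := by
        rw [average_neg, mul_mul_mul_comm, ← Real.exp_add, add_neg_cancel, Real.exp_zero, mul_one,
          sq]

end ReverseJensen

theorem stmt12 :
    ∃ ε C : ℝ, 0 < ε ∧
      ∀ φ : ℝ → ℝ, LocallyIntegrable φ volume →
        -- the BMO seminorm of `φ` is at most `ε`
        (∀ a b : ℝ, a < b →
          (b - a)⁻¹ * (∫ x in a..b, |φ x - (b - a)⁻¹ * ∫ y in a..b, φ y|) ≤ ε) →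
        -- then `w = e^φ` is an `A₂` weight with constant `C`
        ∀ a b : ℝ, a < b →
          IntegrableOn (fun x => Real.exp (φ x)) (Set.Ioc a b) volume ∧
          IntegrableOn (fun x => Real.exp (-φ x)) (Set.Ioc a b) volume ∧
          ((b - a)⁻¹ * ∫ x in a..b, Real.exp (φ x)) *
            ((b - a)⁻¹ * ∫ x in a..b, Real.exp (-φ x)) ≤ C := by
  have hδ : Real.exp (-2) / 2 < Real.exp (-2) := half_lt_self (Real.exp_pos _)
  refine ⟨Real.exp (-2) / 2, reverseJensenConst (Real.exp (-2) / 2) ^ 2, by positivity, ?_⟩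
  intro φ hφ hosc a b hab
  have hB : HasBMOSeminormLE φ (Real.exp (-2) / 2) := fun p q hpq => by
    simpa only [interval_average_eq, smul_eq_mul, Real.norm_eq_abs] using hosc p q hpq
  refine ⟨integrableOn_exp hδ hφ hB hab, integrableOn_exp hδ hφ.neg hB.neg hab, ?_⟩
  simpa only [interval_average_eq, smul_eq_mul] using
    average_exp_mul_average_exp_neg_le hδ hφ hB hab
end

section
/- For every K < ∞ there is a constant C = C(K) < ∞ with the following property. Let w : ℝ → (0, ∞) be measurable with w and w^{-1} locally integrable, and suppose that for every bounded interval I = [α, β] with α < β one has ((1/|I|)·∫_I w(x) dx)·((1/|I|)·∫_I w(x)^{-1} dx) ≤ K (that is, w satisfies the A₂ condition with constant K). Then log w is locally integrable and for every bounded interval I of positive length, (1/|I|)·∫_I |log w(x) − (log w)_I| dx ≤ C, where (log w)_I = (1/|I|)·∫_I log w(x) dx. (That is, the logarithm of an A₂ weight belongs to BMO.) -/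
open MeasureTheory

/-!
Fix a set of finite measure and let `m` be the mean of `log w` over it. Since
`|t| ≤ exp t + exp (-t)`, the mean of `|log w - m|` is at most `exp (-m)` times the mean of `w` plus
`exp m` times the mean of `w⁻¹`. By Jensen's inequality `exp m` is at most the mean of `w` and
`exp (-m)` at most the mean of `w⁻¹`, so both terms are bounded by the product of the two means,
which the `A₂` condition controls.
-/

lemma abs_log_sub_le {y : ℝ} (hy : 0 < y) (m : ℝ) :
    |Real.log y - m| ≤ Real.exp (-m) * y + Real.exp m * y⁻¹ :=
  calc |Real.log y - m| ≤ Real.exp |Real.log y - m| := by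
        linarith [Real.add_one_le_exp |Real.log y - m|]
    _ ≤ Real.exp (Real.log y - m) + Real.exp (-(Real.log y - m)) := Real.exp_abs_le _
    _ = Real.exp (-m) * y + Real.exp m * y⁻¹ := by
        rw [neg_sub, Real.exp_sub, Real.exp_sub, Real.exp_log hy, Real.exp_neg]
        ring

section Integral

variable {X : Type*} [MeasurableSpace X] {μ : Measure X} {w : X → ℝ}

lemma integrable_log_of_integrable_inv (hpos : ∀ᵐ x ∂μ, 0 < w x) (hw : Integrable w μ)
    (hw_inv : Integrable (fun x => (w x)⁻¹) μ) : Integrable (fun x => Real.log (w x)) μ := by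
  refine (hw.add hw_inv).mono' hw.aemeasurable.log.aestronglyMeasurable ?_
  filter_upwards [hpos] with x hx
  simpa using abs_log_sub_le hx 0

lemma exp_integral_log_le_integral [IsProbabilityMeasure μ] (hpos : ∀ᵐ x ∂μ, 0 < w x)
    (hw : Integrable w μ) (hlog : Integrable (fun x => Real.log (w x)) μ) :
    Real.exp (∫ x, Real.log (w x) ∂μ) ≤ ∫ x, w x ∂μ := by
  have exp_log_ae : (fun x => Real.exp (Real.log (w x))) =ᵐ[μ] w :=
    hpos.mono fun _ hx => Real.exp_log hx
  rw [← integral_congr_ae exp_log_ae]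
  exact convexOn_exp.map_integral_le Real.continuous_exp.continuousOn isClosed_univ
    (.of_forall fun _ => Set.mem_univ _) hlog (hw.congr exp_log_ae.symm)

theorem integral_abs_log_sub_integral_log_le [IsProbabilityMeasure μ]
    (hpos : ∀ᵐ x ∂μ, 0 < w x) (hw : Integrable w μ) (hw_inv : Integrable (fun x => (w x)⁻¹) μ) :
    ∫ x, |Real.log (w x) - ∫ y, Real.log (w y) ∂μ| ∂μ ≤
      2 * ((∫ x, w x ∂μ) * ∫ x, (w x)⁻¹ ∂μ) := by
  have hlog := integrable_log_of_integrable_inv hpos hw hw_inv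
  set m := ∫ x, Real.log (w x) ∂μ
  have exp_le : Real.exp m ≤ ∫ x, w x ∂μ := exp_integral_log_le_integral hpos hw hlog
  have exp_neg_le : Real.exp (-m) ≤ ∫ x, (w x)⁻¹ ∂μ := by
    simpa only [Real.log_inv, integral_neg] using
      exp_integral_log_le_integral (hpos.mono fun _ hx => inv_pos.2 hx) hw_inv
        (by simp only [Real.log_inv]; exact hlog.neg)
  have mean_nonneg : 0 ≤ ∫ x, w x ∂μ := (Real.exp_pos m).le.trans exp_le
  have mean_inv_nonneg : 0 ≤ ∫ x, (w x)⁻¹ ∂μ := (Real.exp_pos (-m)).le.trans exp_neg_le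
  calc ∫ x, |Real.log (w x) - m| ∂μ
      ≤ ∫ x, (Real.exp (-m) * w x + Real.exp m * (w x)⁻¹) ∂μ :=
        integral_mono_ae (hlog.sub (integrable_const m)).abs
          ((hw.const_mul _).add (hw_inv.const_mul _))
          (hpos.mono fun _ hx => abs_log_sub_le hx m)
    _ = Real.exp (-m) * (∫ x, w x ∂μ) + Real.exp m * ∫ x, (w x)⁻¹ ∂μ := by
        rw [integral_add (hw.const_mul _) (hw_inv.const_mul _), integral_const_mul,
          integral_const_mul]
    _ ≤ (∫ x, (w x)⁻¹ ∂μ) * (∫ x, w x ∂μ) + (∫ x, w x ∂μ) * ∫ x, (w x)⁻¹ ∂μ := by gcongr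
    _ = 2 * ((∫ x, w x ∂μ) * ∫ x, (w x)⁻¹ ∂μ) := by ring

theorem average_abs_log_sub_average_log_le [IsFiniteMeasure μ]
    (hpos : ∀ᵐ x ∂μ, 0 < w x) (hw : Integrable w μ) (hw_inv : Integrable (fun x => (w x)⁻¹) μ) :
    ⨍ x, |Real.log (w x) - ⨍ y, Real.log (w y) ∂μ| ∂μ ≤
      2 * ((⨍ x, w x ∂μ) * ⨍ x, (w x)⁻¹ ∂μ) := by
  rcases eq_zero_or_neZero μ with rfl | _
  · simp
  · exact integral_abs_log_sub_integral_log_le (Measure.ae_smul_measure hpos _)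
      hw.to_average hw_inv.to_average

end Integral

section LocallyIntegrable

variable {X : Type*} [TopologicalSpace X] [MeasurableSpace X] {μ : Measure X} {w : X → ℝ}

lemma locallyIntegrable_log_of_locallyIntegrable_inv (hpos : ∀ᵐ x ∂μ, 0 < w x)
    (hw : LocallyIntegrable w μ) (hw_inv : LocallyIntegrable (fun x => (w x)⁻¹) μ) :
    LocallyIntegrable (fun x => Real.log (w x)) μ := by
  intro x
  obtain ⟨s, hs, hws⟩ := hw x
  obtain ⟨t, ht, hwt⟩ := hw_inv x
  exact ⟨s ∩ t, Filter.inter_mem hs ht, integrable_log_of_integrable_inv (ae_restrict_of_ae hpos)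
    (hws.mono_set Set.inter_subset_left) (hwt.mono_set Set.inter_subset_right)⟩

theorem stmt13_general [IsFiniteMeasureOnCompacts μ] (hpos : ∀ᵐ x ∂μ, 0 < w x)
    (hw : LocallyIntegrable w μ) (hw_inv : LocallyIntegrable (fun x => (w x)⁻¹) μ) :
    LocallyIntegrable (fun x => Real.log (w x)) μ ∧
    ∀ k : Set X, IsCompact k → ∀ s ⊆ k,
      ⨍ x in s, |Real.log (w x) - ⨍ y in s, Real.log (w y) ∂μ| ∂μ ≤
        2 * ((⨍ x in s, w x ∂μ) * ⨍ x in s, (w x)⁻¹ ∂μ) := by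
  refine ⟨locallyIntegrable_log_of_locallyIntegrable_inv hpos hw hw_inv, fun k hk s hsk => ?_⟩
  have : IsFiniteMeasure (μ.restrict s) :=
    isFiniteMeasure_restrict.2 (measure_lt_top_mono hsk hk.measure_lt_top).ne
  exact average_abs_log_sub_average_log_le (ae_restrict_of_ae hpos)
    ((hw.integrableOn_isCompact hk).mono_set hsk) ((hw_inv.integrableOn_isCompact hk).mono_set hsk)

end LocallyIntegrable

theorem stmt13 (K : ℝ) :
    ∃ C : ℝ,
      ∀ w : ℝ → ℝ, Measurable w → (∀ x, 0 < w x) →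
        LocallyIntegrable w volume → LocallyIntegrable (fun x => (w x)⁻¹) volume →
        -- `w` satisfies the `A₂` condition with constant `K`
        (∀ a b : ℝ, a < b →
          ((b - a)⁻¹ * ∫ x in a..b, w x) * ((b - a)⁻¹ * ∫ x in a..b, (w x)⁻¹) ≤ K) →
        -- then `log w ∈ BMO` with seminorm at most `C`
        LocallyIntegrable (fun x => Real.log (w x)) volume ∧
        ∀ a b : ℝ, a < b →
          (b - a)⁻¹ *
              (∫ x in a..b, |Real.log (w x) - (b - a)⁻¹ * ∫ y in a..b, Real.log (w y)|) ≤
            C := by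
  refine ⟨2 * K, fun w _ hpos hw hw_inv hA₂ => ?_⟩
  obtain ⟨hlog, hosc⟩ := stmt13_general (.of_forall hpos) hw hw_inv
  refine ⟨hlog, fun a b hab => ?_⟩
  have hab_osc := hosc _ isCompact_uIcc _ (Set.uIoc_subset_uIcc (a := a) (b := b))
  simp only [interval_average_eq, smul_eq_mul] at hab_osc
  exact hab_osc.trans (by gcongr; exact hA₂ a b hab)
end
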